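/- arXiv:0709.3986 — 11 statements merged into one kernel-verified Lean document; each statement's English description precedes it below -/
import Mathlib

section
/- Let φ : ℝ → ℝ be infinitely differentiable. Suppose that for every s₀ ∈ ℝ there exist an even natural number i₀, a real δ > 0 and a real C ≥ 0 such that every smooth 1-periodic function u : ℝ → ℝ with ‖u‖_{i₀} < δ satisfies sup_{s ∈ ℝ} |iteratedDeriv (i₀+1) (fun s => deriv φ (s₀ + u s)) s| ≤ C. Then there exist α, β ∈ ℝ such that φ t = α·t + β for all t ∈ ℝ. -/
theorem aux_bound (F : ℝ → ℝ) (hF : ContDiff ℝ (⊤ : ℕ∞) F) (n : ℕ) :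
    ∃ B : ℝ, 0 ≤ B ∧ ∀ u : ℝ → ℝ, ContDiff ℝ (⊤ : ℕ∞) u → u 0 = 0 →
      (∀ l, l ≤ n → |iteratedDeriv l u 0| ≤ 1) →
      ∀ m, m ≤ n → |iteratedDeriv m (fun s => F (u s)) 0| ≤ B := by
  refine ⟨n.factorial * ∑ i ∈ Finset.range (n + 1), |iteratedDeriv i F 0|, by positivity, ?_⟩
  intro u hu hu0 hl m hm
  have key := norm_iteratedFDeriv_comp_le (n := m) hF hu (by exact_mod_cast le_top) (0 : ℝ)
    (C := ∑ i ∈ Finset.range (n + 1), |iteratedDeriv i F 0|) (D := 1)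
    (by
      intro i hi
      rw [norm_iteratedFDeriv_eq_norm_iteratedDeriv, hu0, Real.norm_eq_abs]
      exact Finset.single_le_sum (f := fun i => |iteratedDeriv i F 0|)
        (fun _ _ => abs_nonneg _) (Finset.mem_range.2 (by omega)))
    (by
      intro i _ hi
      rw [norm_iteratedFDeriv_eq_norm_iteratedDeriv, Real.norm_eq_abs, one_pow]
      exact hl i (by omega))
  rw [norm_iteratedFDeriv_eq_norm_iteratedDeriv, Real.norm_eq_abs, one_pow, mul_one] at key
  refine key.trans ?_
  gcongr

theorem aux_main (F : ℝ → ℝ) (hF : ContDiff ℝ (⊤ : ℕ∞) F) (n : ℕ) :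
    ∃ B : ℝ, ∀ u : ℝ → ℝ, ContDiff ℝ (⊤ : ℕ∞) u → u 0 = 0 →
      (∀ l, l ≤ n → |iteratedDeriv l u 0| ≤ 1) →
      |iteratedDeriv (n + 1) (fun s => F (u s)) 0 - deriv F 0 * iteratedDeriv (n + 1) u 0|
        ≤ B := by
  have hF' : ContDiff ℝ (⊤ : ℕ∞) (deriv F) := (contDiff_infty_iff_deriv.1 hF).2
  obtain ⟨B, hB, hb⟩ := aux_bound (deriv F) hF' n
  refine ⟨∑ i ∈ Finset.range n, (n.choose (i + 1) : ℝ) * B, ?_⟩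
  intro u hu hu0 hl
  have hu' : ContDiff ℝ (⊤ : ℕ∞) (deriv u) := (contDiff_infty_iff_deriv.1 hu).2
  have h1 : deriv (fun s => F (u s)) = (fun s => deriv F (u s)) * deriv u := by
    funext s
    exact deriv_comp s ((hF.differentiable (by simp)) _) ((hu.differentiable (by simp)) _)
  rw [iteratedDeriv_succ', h1, iteratedDeriv_mul
    (f := fun s => deriv F (u s)) ((hF'.comp hu).contDiffAt.of_le (by exact_mod_cast le_top))
    (hu'.contDiffAt.of_le (by exact_mod_cast le_top)), Finset.sum_range_succ']
  simp only [← iteratedDeriv_succ', Nat.choose_zero_right, iteratedDeriv_zero, hu0, Nat.sub_zero,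
    Nat.cast_one, one_mul, add_sub_cancel_right]
  refine (Finset.abs_sum_le_sum_abs _ _).trans (Finset.sum_le_sum fun i hi => ?_)
  have hi := Finset.mem_range.1 hi
  rw [abs_mul, abs_mul, Nat.abs_cast]
  have e1 := hb u hu hu0 hl (i + 1) (by omega)
  have e2 := hl (n - (i + 1) + 1) (by omega)
  have := mul_le_mul e1 e2 (abs_nonneg _) hB
  rw [mul_assoc]
  rw [mul_one] at this
  gcongr

theorem aux_sin (c w : ℝ) (l : ℕ) (s : ℝ) :
    iteratedDeriv l (fun s => c * Real.sin (w * s)) s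
      = c * (w ^ l * iteratedDeriv l Real.sin (w * s)) := by
  have := iteratedDeriv_comp_const_mul (n := l) (Real.contDiff_sin) w
  rw [iteratedDeriv_const_mul_field, this]

theorem aux_zero (F : ℝ → ℝ) (hF : ContDiff ℝ (⊤ : ℕ∞) F) (i₀ : ℕ) (he : Even i₀) (δ : ℝ)
    (hδ : 0 < δ) (C : ℝ)
    (h : ∀ u : ℝ → ℝ, ContDiff ℝ (⊤ : ℕ∞) u → (∀ s : ℝ, u (s + 1) = u s) →
        (∃ r : ℝ, r < δ ∧ ∀ l : ℕ, l ≤ i₀ → ∀ s : ℝ, |iteratedDeriv l u s| ≤ r) →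
        ∀ s : ℝ, |iteratedDeriv (i₀ + 1) (fun s => F (u s)) s| ≤ C) :
    deriv F 0 = 0 := by
  obtain ⟨B, hB⟩ := aux_main F hF i₀
  obtain ⟨c, hc, hcδ, hc1⟩ : ∃ c : ℝ, 0 < c ∧ c < δ ∧ c ≤ 1 :=
    ⟨min (δ / 2) 1, by positivity, (min_le_left _ _).trans_lt (by linarith), min_le_right _ _⟩
  have key : ∀ k : ℕ, |deriv F 0| * (c * k) ≤ B + C := by
    intro k
    set w : ℝ := ((k + 1 : ℕ) : ℝ) * (2 * Real.pi) with hw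
    have hkw : (k : ℝ) + 1 ≤ w := by
      rw [hw]; push_cast
      have := Real.pi_gt_three
      nlinarith [(Nat.cast_nonneg k : (0 : ℝ) ≤ k)]
    have hw1 : 1 ≤ w := by linarith [(Nat.cast_nonneg k : (0 : ℝ) ≤ k)]
    have hw0 : 0 < w := by linarith
    set u : ℝ → ℝ := fun s => c / w ^ i₀ * Real.sin (w * s) with hu
    have hus : ContDiff ℝ (⊤ : ℕ∞) u :=
      contDiff_const.mul (Real.contDiff_sin.comp (contDiff_const.mul contDiff_id))
    have hup : ∀ s, u (s + 1) = u s := by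
      intro s
      simp only [hu]
      rw [mul_add, mul_one, hw, Real.sin_add_nat_mul_two_pi]
    have hub : ∀ l : ℕ, l ≤ i₀ → ∀ s : ℝ, |iteratedDeriv l u s| ≤ c := by
      intro l hl s
      rw [hu, aux_sin, abs_mul, abs_mul, abs_of_pos (by positivity), abs_of_pos (by positivity)]
      have a1 := Real.abs_iteratedDeriv_sin_le_one l (w * s)
      have a2 : w ^ l ≤ w ^ i₀ := pow_le_pow_right₀ hw1 hl
      calc c / w ^ i₀ * (w ^ l * |iteratedDeriv l Real.sin (w * s)|)
          ≤ c / w ^ i₀ * (w ^ i₀ * 1) := by gcongr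
        _ = c := by field_simp
    have hu0 : u 0 = 0 := by simp [hu]
    have b1 := h u hus hup ⟨c, hcδ, hub⟩ 0
    have b2 := hB u hus hu0 (fun l hl => (hub l hl 0).trans hc1)
    have b3 : |iteratedDeriv (i₀ + 1) u 0| = c * w := by
      obtain ⟨j, rfl⟩ := he.two_dvd
      rw [hu, aux_sin, Real.iteratedDeriv_odd_sin]
      simp only [Pi.mul_apply, Pi.pow_apply, Pi.neg_apply, Pi.one_apply, mul_zero, Real.cos_zero,
        mul_one, abs_mul, abs_pow, abs_neg, abs_one, one_pow, abs_div, abs_of_pos hc,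
        abs_of_pos hw0]
      field_simp
      ring
    have b4 : |deriv F 0| * (c * w) ≤ B + C := by
      rw [← b3, ← abs_mul]
      have := abs_sub_abs_le_abs_sub (deriv F 0 * iteratedDeriv (i₀ + 1) u 0)
        (iteratedDeriv (i₀ + 1) (fun s => F (u s)) 0)
      rw [abs_sub_comm] at this
      linarith
    refine le_trans ?_ b4
    gcongr
    linarith
  by_contra hne
  have hp : 0 < |deriv F 0| * c := mul_pos (abs_pos.2 hne) hc
  obtain ⟨k, hk⟩ := exists_nat_gt ((B + C) / (|deriv F 0| * c))
  rw [div_lt_iff₀ hp] at hk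
  have := key k
  nlinarith

/-- Calibration-free quantitative form of Theorem 11: if for every `s₀` there are an even
`i₀`, `δ > 0` and `C ≥ 0` such that every smooth 1-periodic `u` with `‖u‖_{i₀} < δ`
satisfies `sup_s |D^{i₀+1} (φ' ∘ (s₀ + u))| ≤ C`, then `φ` is affine. -/
theorem stmt0 (φ : ℝ → ℝ) (hφ : ContDiff ℝ (⊤ : ℕ∞) φ)
    (h : ∀ s₀ : ℝ, ∃ i₀ : ℕ, Even i₀ ∧ ∃ δ : ℝ, 0 < δ ∧ ∃ C : ℝ, 0 ≤ C ∧
      ∀ u : ℝ → ℝ, ContDiff ℝ (⊤ : ℕ∞) u → (∀ s : ℝ, u (s + 1) = u s) →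
        (∃ r : ℝ, r < δ ∧ ∀ l : ℕ, l ≤ i₀ → ∀ s : ℝ, |iteratedDeriv l u s| ≤ r) →
        ∀ s : ℝ, |iteratedDeriv (i₀ + 1) (fun s => deriv φ (s₀ + u s)) s| ≤ C) :
    ∃ α β : ℝ, ∀ t : ℝ, φ t = α * t + β := by
  have hφ' : ContDiff ℝ (⊤ : ℕ∞) (deriv φ) := (contDiff_infty_iff_deriv.1 hφ).2
  have h2 : ∀ s₀, deriv (deriv φ) s₀ = 0 := by
    intro s₀
    obtain ⟨i₀, he, δ, hδ, C, _, hC⟩ := h s₀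
    have := aux_zero (fun t => deriv φ (s₀ + t)) (hφ'.comp (contDiff_const.add contDiff_id))
      i₀ he δ hδ C hC
    rwa [deriv_comp_const_add, add_zero] at this
  have h3 := is_const_of_deriv_eq_zero (hφ'.differentiable (by simp)) h2
  have hd : Differentiable ℝ φ := hφ.differentiable (by simp)
  refine ⟨deriv φ 0, φ 0, fun t => ?_⟩
  have h4 : ∀ x, HasDerivAt (fun x => φ x - deriv φ 0 * x) 0 x := by
    intro x
    have := (hd x).hasDerivAt.sub ((hasDerivAt_id x).const_mul (deriv φ 0))
    rw [h3 x 0, mul_one, sub_self] at this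
    exact this
  have h5 := is_const_of_deriv_eq_zero (fun x => (h4 x).differentiableAt)
    (fun x => (h4 x).deriv) t 0
  simp only [mul_zero, sub_zero] at h5
  linarith
end

section
/- Let φ : ℝ → ℝ be infinitely differentiable and let x, u : ℝ → ℝ be smooth 1-periodic functions. Then for every k ∈ ℕ and every ε > 0 there exists δ > 0 such that for every real t with 0 < |t| < δ, every l ≤ k and every s ∈ ℝ one has |iteratedDeriv l (fun s => (φ (x s + t·u s) − φ (x s))/t − deriv φ (x s) · u s) s| < ε. (Thus the Gateaux derivative of the map x ↦ φ∘x on the Fréchet space of smooth 1-periodic functions at x in direction u is (φ'∘x)·u, with convergence of the difference quotients in every C^k sup-seminorm.) -/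
open scoped ContDiff in
/-- A family of smooth functions whose derivatives up to order `k` are uniformly `O(t)`. -/
def TFam (k : ℕ) (f : ℝ → ℝ → ℝ) : Prop :=
  (∀ t, ContDiff ℝ ∞ (f t)) ∧ ∀ l, l ≤ k → ∃ C : ℝ, 0 ≤ C ∧
    ∀ t : ℝ, |t| ≤ 1 → t ≠ 0 → ∀ s, |iteratedDeriv l (f t) s| ≤ C * |t|

open scoped ContDiff in
/-- Smooth and 1-periodic. -/
def SPer (g : ℝ → ℝ) : Prop := ContDiff ℝ ∞ g ∧ ∀ s, g (s + 1) = g s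

lemma natLeInf (n : ℕ) : ((n : ℕ) : WithTop ℕ∞) ≤ ((⊤ : ℕ∞) : WithTop ℕ∞) := by
  exact_mod_cast le_top

lemma SPer.bdd {g : ℝ → ℝ} (hg : SPer g) (l : ℕ) :
    ∃ C : ℝ, 0 ≤ C ∧ ∀ s, |iteratedDeriv l g s| ≤ C := by
  have hp : Function.Periodic (iteratedDeriv l g) 1 := by
    intro s
    have h := iteratedDeriv_comp_add_const l g 1
    rw [show (fun z => g (z + 1)) = g from funext hg.2] at h
    exact (congrFun h s).symm
  have hb := hp.isBounded_of_continuous one_ne_zero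
    (hg.1.continuous_iteratedDeriv l (natLeInf l))
  obtain ⟨C, hC⟩ := hb.exists_norm_le
  have h : ∀ s, |iteratedDeriv l g s| ≤ C := fun s => hC _ ⟨s, rfl⟩
  exact ⟨C, (abs_nonneg _).trans (h 0), h⟩

lemma SPer.deriv {g : ℝ → ℝ} (hg : SPer g) : SPer (deriv g) := by
  refine ⟨(contDiff_infty_iff_deriv.mp hg.1).2, fun s => ?_⟩
  have h := deriv_comp_add_const g 1 s
  rw [show (fun z => g (z + 1)) = g from funext hg.2] at h
  exact h.symm

lemma SPer.mul {f g : ℝ → ℝ} (hf : SPer f) (hg : SPer g) : SPer (fun s => f s * g s) :=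
  ⟨hf.1.mul hg.1, fun s => by simp only [hf.2, hg.2]⟩

open scoped ContDiff in
lemma SPer.comp {f g : ℝ → ℝ} (hf : ContDiff ℝ ∞ f) (hg : SPer g) : SPer (fun s => f (g s)) :=
  ⟨hf.comp hg.1, fun s => by simp only [hg.2]⟩

lemma TFam.add {k : ℕ} {f g : ℝ → ℝ → ℝ} (hf : TFam k f) (hg : TFam k g) :
    TFam k (fun t s => f t s + g t s) := by
  refine ⟨fun t => (hf.1 t).add (hg.1 t), fun l hl => ?_⟩
  obtain ⟨A, hA, hA'⟩ := hf.2 l hl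
  obtain ⟨B, hB, hB'⟩ := hg.2 l hl
  refine ⟨A + B, by positivity, fun t h1 h0 s => ?_⟩
  have h := iteratedDeriv_add (n := l) (x := s) (((hf.1 t).of_le (natLeInf l)).contDiffAt)
    (((hg.1 t).of_le (natLeInf l)).contDiffAt)
  change |iteratedDeriv l (f t + g t) s| ≤ _
  rw [h, add_mul]
  exact (abs_add_le _ _).trans (add_le_add (hA' t h1 h0 s) (hB' t h1 h0 s))

lemma TFam.smul {k : ℕ} {f : ℝ → ℝ → ℝ} (hf : TFam k f) :
    TFam k (fun t s => t * f t s) := by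
  refine ⟨fun t => contDiff_const.mul (hf.1 t), fun l hl => ?_⟩
  obtain ⟨A, hA, hA'⟩ := hf.2 l hl
  refine ⟨A, hA, fun t h1 h0 s => ?_⟩
  rw [iteratedDeriv_const_mul_field, abs_mul]
  have := hA' t h1 h0 s
  nlinarith [abs_nonneg (iteratedDeriv l (f t) s)]

lemma SPer.tfam {g : ℝ → ℝ} (hg : SPer g) (k : ℕ) : TFam k (fun t s => t * g s) := by
  refine ⟨fun t => contDiff_const.mul hg.1, fun l hl => ?_⟩
  obtain ⟨A, hA, hA'⟩ := hg.bdd l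
  refine ⟨A, hA, fun t h1 h0 s => ?_⟩
  rw [iteratedDeriv_const_mul_field, abs_mul, mul_comm]
  exact mul_le_mul_of_nonneg_right (hA' s) (abs_nonneg t)

lemma TFam.mul {k : ℕ} {f : ℝ → ℝ → ℝ} {g : ℝ → ℝ} (hf : TFam k f) (hg : SPer g) :
    TFam k (fun t s => g s * f t s) := by
  refine ⟨fun t => hg.1.mul (hf.1 t), fun l hl => ?_⟩
  choose A hA hA' using hg.bdd
  have hf2 : ∀ i : ℕ, ∃ C : ℝ, 0 ≤ C ∧ (i ≤ k →
    ∀ t : ℝ, |t| ≤ 1 → t ≠ 0 → ∀ s, |iteratedDeriv i (f t) s| ≤ C * |t|) := by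
    intro i
    by_cases hi : i ≤ k
    · obtain ⟨C, h1, h2⟩ := hf.2 i hi
      exact ⟨C, h1, fun _ => h2⟩
    · exact ⟨0, le_rfl, fun h => absurd h hi⟩
  choose B hB hB' using hf2
  refine ⟨∑ i ∈ Finset.range (l + 1), l.choose i * A i * B (l - i),
    Finset.sum_nonneg fun i _ => by have := hA i; have := hB (l - i); positivity,
    fun t h1 h0 s => ?_⟩
  have h := iteratedDeriv_mul (n := l) (x := s) ((hg.1.of_le (natLeInf l)).contDiffAt)
    (((hf.1 t).of_le (natLeInf l)).contDiffAt)
  change |iteratedDeriv l (g * f t) s| ≤ _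
  rw [h, Finset.sum_mul]
  refine (Finset.abs_sum_le_sum_abs _ _).trans (Finset.sum_le_sum fun i _ => ?_)
  rw [abs_mul, abs_mul, Nat.abs_cast, mul_assoc, mul_assoc, mul_assoc]
  refine mul_le_mul_of_nonneg_left ?_ (by positivity)
  exact mul_le_mul (hA' i s) (hB' _ (by omega) t h1 h0 s) (abs_nonneg _) (hA i)

/-- The error of the difference quotient. -/
noncomputable def dq (φ x u : ℝ → ℝ) (t s : ℝ) : ℝ :=
  (φ (x s + t * u s) - φ (x s)) / t - deriv φ (x s) * u s

open scoped ContDiff in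
lemma dq_smooth {φ x u : ℝ → ℝ} (hφ : ContDiff ℝ ∞ φ) (hx : SPer x) (hu : SPer u) (t : ℝ) :
    ContDiff ℝ ∞ (dq φ x u t) := by
  have h1 := hx.1
  have h2 := hu.1
  have h3 := (contDiff_infty_iff_deriv.mp hφ).2
  unfold dq
  exact (((hφ.comp (h1.add (contDiff_const.mul h2))).sub (hφ.comp h1)).div_const t).sub
    ((h3.comp h1).mul h2)

open scoped ContDiff in
lemma dq_zero {φ x u : ℝ → ℝ} (hφ : ContDiff ℝ ∞ φ) (hx : SPer x) (hu : SPer u) :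
    ∃ C : ℝ, 0 ≤ C ∧ ∀ t : ℝ, |t| ≤ 1 → t ≠ 0 → ∀ s, |dq φ x u t s| ≤ C * |t| := by
  obtain ⟨M, hM, hM'⟩ := hx.bdd 0
  obtain ⟨N, hN, hN'⟩ := hu.bdd 0
  simp only [iteratedDeriv_zero] at hM' hN'
  have hφ' := (contDiff_infty_iff_deriv.mp hφ)
  have hφ'' := (contDiff_infty_iff_deriv.mp hφ'.2)
  obtain ⟨K, hK⟩ := (isCompact_Icc (a := -(M + N)) (b := M + N)).exists_bound_of_continuousOn
    hφ''.2.continuous.continuousOn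
  have hK0 : 0 ≤ K := (norm_nonneg _).trans (hK 0 ⟨by linarith, by linarith⟩)
  refine ⟨K * N ^ 2, by positivity, fun t h1 h0 s => ?_⟩
  set a := x s
  set h := t * u s with hh
  have hN1 := hN' s
  have hhN : |h| ≤ N := by
    rw [hh, abs_mul]; nlinarith [abs_nonneg (u s)]
  have ha := abs_le.mp (hM' s)
  have hb := abs_le.mp hhN
  have hsub : Set.uIcc a (a + h) ⊆ Set.Icc (-(M + N)) (M + N) := by
    apply Set.uIcc_subset_Icc <;> constructor <;> linarith [ha.1, ha.2, hb.1, hb.2]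
  have hder : ∀ y ∈ Set.uIcc a (a + h), ‖deriv φ y - deriv φ a‖ ≤ K * |h| := by
    intro y hy
    have := Convex.norm_image_sub_le_of_norm_deriv_le (f := deriv φ) (C := K)
      (fun z _ => hφ''.1 z) (fun z hz => hK z (hsub hz)) (convex_uIcc a (a + h))
      (Set.left_mem_uIcc) hy
    refine this.trans (mul_le_mul_of_nonneg_left ?_ hK0)
    have := Set.abs_sub_left_of_mem_uIcc hy
    simpa using this
  have hmain : ‖(φ (a + h) - deriv φ a * (a + h)) - (φ a - deriv φ a * a)‖ ≤ K * |h| * ‖a + h - a‖ := by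
    refine Convex.norm_image_sub_le_of_norm_hasDerivWithin_le
      (f := fun y => φ y - deriv φ a * y) (f' := fun y => deriv φ y - deriv φ a)
      (fun y _ => ?_) hder (convex_uIcc a (a + h)) Set.left_mem_uIcc Set.right_mem_uIcc
    have := (hφ'.1 y).hasDerivAt.sub ((hasDerivAt_id y).const_mul (deriv φ a))
    rw [mul_one] at this
    exact this.hasDerivWithinAt
  have e : dq φ x u t s = ((φ (a + h) - deriv φ a * (a + h)) - (φ a - deriv φ a * a)) / t := by
    unfold dq
    rw [hh]
    field_simp
    ring
  rw [e, abs_div, div_le_iff₀ (abs_pos.mpr h0)]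
  refine hmain.trans ?_
  rw [add_sub_cancel_left, Real.norm_eq_abs, hh, abs_mul]
  have : |u s| ^ 2 ≤ N ^ 2 := pow_le_pow_left₀ (abs_nonneg _) hN1 2
  calc K * (|t| * |u s|) * (|t| * |u s|) = (K * |t| ^ 2) * |u s| ^ 2 := by ring
    _ ≤ (K * |t| ^ 2) * N ^ 2 := mul_le_mul_of_nonneg_left this (by positivity)
    _ = _ := by ring

open scoped ContDiff in
lemma dq_deriv {φ x u : ℝ → ℝ} (hφ : ContDiff ℝ ∞ φ) (hx : SPer x) (hu : SPer u)
    {t : ℝ} (ht : t ≠ 0) :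
    deriv (dq φ x u t) = fun s => (deriv x s * dq (deriv φ) x u t s
      + t * (deriv u s * dq (deriv φ) x u t s))
      + t * (deriv (deriv φ) (x s) * (u s * deriv u s)) := by
  have hφ' := (contDiff_infty_iff_deriv.mp hφ)
  have hφ'' := (contDiff_infty_iff_deriv.mp hφ'.2)
  funext s
  have dx := ((contDiff_infty_iff_deriv.mp hx.1).1 s).hasDerivAt
  have du := ((contDiff_infty_iff_deriv.mp hu.1).1 s).hasDerivAt
  have d1 := HasDerivAt.comp s (hφ'.1 (x s + t * u s)).hasDerivAt (dx.add (du.const_mul t))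
  have d2 := HasDerivAt.comp s (hφ'.1 (x s)).hasDerivAt dx
  have d3 := HasDerivAt.comp s (hφ''.1 (x s)).hasDerivAt dx
  have d := ((d1.sub d2).div_const t).sub (d3.mul du)
  have e : deriv (dq φ x u t) s = _ := d.deriv
  rw [e]
  unfold dq
  simp only [Function.comp]
  field_simp
  ring

open scoped ContDiff in
lemma dq_tfam (k : ℕ) : ∀ {φ x u : ℝ → ℝ}, ContDiff ℝ ∞ φ → SPer x → SPer u →
    TFam k (dq φ x u) := by
  induction k with
  | zero =>
    intro φ x u hφ hx hu
    refine ⟨dq_smooth hφ hx hu, fun l hl => ?_⟩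
    obtain rfl : l = 0 := by omega
    simpa using dq_zero hφ hx hu
  | succ k ih =>
    intro φ x u hφ hx hu
    refine ⟨dq_smooth hφ hx hu, fun l hl => ?_⟩
    cases l with
    | zero => simpa using dq_zero hφ hx hu
    | succ l =>
      have hφ' := (contDiff_infty_iff_deriv.mp hφ).2
      have hφ'' := (contDiff_infty_iff_deriv.mp hφ').2
      have h := ih hφ' hx hu
      have H := ((h.mul hx.deriv).add (h.mul hu.deriv).smul).add
        (((SPer.comp hφ'' hx).mul (hu.mul hu.deriv)).tfam k)
      obtain ⟨C, hC, hC'⟩ := H.2 l (by omega)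
      refine ⟨C, hC, fun t h1 h0 s => ?_⟩
      rw [iteratedDeriv_succ', dq_deriv hφ hx hu h0]
      exact hC' t h1 h0 s

/-- Lemma 8 of the paper: for smooth `φ` and smooth 1-periodic `x, u`, the difference
quotients of `x ↦ φ ∘ x` at `x` in direction `u` converge to `(φ' ∘ x) · u` in every
`C^k` sup-seminorm of the Fréchet space of smooth 1-periodic functions. -/
theorem stmt2 (φ : ℝ → ℝ) (hφ : ContDiff ℝ (⊤ : ℕ∞) φ)
    (x u : ℝ → ℝ) (hx : ContDiff ℝ (⊤ : ℕ∞) x) (hxper : ∀ s : ℝ, x (s + 1) = x s)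
    (hu : ContDiff ℝ (⊤ : ℕ∞) u) (huper : ∀ s : ℝ, u (s + 1) = u s) :
    ∀ k : ℕ, ∀ ε : ℝ, 0 < ε → ∃ δ : ℝ, 0 < δ ∧
      ∀ t : ℝ, 0 < |t| → |t| < δ → ∀ l : ℕ, l ≤ k → ∀ s : ℝ,
        |iteratedDeriv l
          (fun s => (φ (x s + t * u s) - φ (x s)) / t - deriv φ (x s) * u s) s| < ε := by
  intro k ε hε
  have H := dq_tfam k hφ ⟨hx, hxper⟩ ⟨hu, huper⟩
  have H2 : ∀ i : ℕ, ∃ C : ℝ, 0 ≤ C ∧ (i ≤ k →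
    ∀ t : ℝ, |t| ≤ 1 → t ≠ 0 → ∀ s, |iteratedDeriv i (dq φ x u t) s| ≤ C * |t|) := by
    intro i
    by_cases hi : i ≤ k
    · obtain ⟨C, h1, h2⟩ := H.2 i hi
      exact ⟨C, h1, fun _ => h2⟩
    · exact ⟨0, le_rfl, fun h => absurd h hi⟩
  choose C hC hC' using H2
  set S := ∑ i ∈ Finset.range (k + 1), C i with hS
  have hS0 : 0 ≤ S := Finset.sum_nonneg fun i _ => hC i
  refine ⟨min 1 (ε / (S + 1)), by positivity, fun t h0 ht l hl s => ?_⟩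
  have hlS : C l ≤ S :=
    Finset.single_le_sum (fun i _ => hC i) (Finset.mem_range.mpr (by omega))
  have h := hC' l hl t (ht.le.trans (min_le_left _ _)) (abs_pos.mp h0) s
  have h2 := ht.trans_le (min_le_right _ _)
  rw [lt_div_iff₀ (by positivity)] at h2
  refine lt_of_le_of_lt h ?_
  nlinarith
end

section
/- Let φ : ℝ → ℝ and x, u : ℝ → ℝ be infinitely differentiable. Then for every compact set K ⊆ ℝ, every k ∈ ℕ and every ε > 0 there exists δ > 0 such that for every real t with 0 < |t| < δ, every l ≤ k and every s ∈ K one has |iteratedDeriv l (fun s => (φ (x s + t·u s) − φ (x s))/t − deriv φ (x s) · u s) s| < ε. -/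
open Filter Topology

/-- The error of the difference quotient. -/
noncomputable def QQ (φ x u : ℝ → ℝ) (t s : ℝ) : ℝ :=
  (φ (x s + t * u s) - φ (x s)) / t - deriv φ (x s) * u s

lemma smooth_deriv {f : ℝ → ℝ} (hf : ContDiff ℝ (⊤ : ℕ∞) f) :
    ContDiff ℝ (⊤ : ℕ∞) (deriv f) :=
  ((contDiff_infty_iff_deriv).1 hf).2

lemma QQ_smooth {φ x u : ℝ → ℝ} (hφ : ContDiff ℝ (⊤ : ℕ∞) φ)
    (hx : ContDiff ℝ (⊤ : ℕ∞) x) (hu : ContDiff ℝ (⊤ : ℕ∞) u) (t : ℝ) :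
    ContDiff ℝ (⊤ : ℕ∞) (QQ φ x u t) := by
  unfold QQ
  exact (((hφ.comp (hx.add (contDiff_const.mul hu))).sub (hφ.comp hx)).div_const t).sub
    (((smooth_deriv hφ).comp hx).mul hu)

lemma smooth_hasDerivAt {f : ℝ → ℝ} (hf : ContDiff ℝ (⊤ : ℕ∞) f) (s : ℝ) :
    HasDerivAt f (deriv f s) s :=
  (hf.differentiable (by simp) s).hasDerivAt

/-- Uniform smallness near a compact set of a continuous function vanishing at parameter 0. -/
lemma unif_small (H : ℝ → ℝ → ℝ) (hH : Continuous (fun p : ℝ × ℝ => H p.1 p.2))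
    (h0 : ∀ s, H 0 s = 0) (K : Set ℝ) (hK : IsCompact K) (ε : ℝ) (hε : 0 < ε) :
    ∀ᶠ t in 𝓝 (0 : ℝ), ∀ s ∈ K, |H t s| < ε := by
  apply hK.eventually_forall_of_forall_eventually
  intro s _
  have h : ∀ᶠ p in 𝓝 ((0 : ℝ), s), |H p.1 p.2| < ε := by
    apply (hH.abs).continuousAt.eventually_lt continuousAt_const
    simpa [h0] using hε
  first
    | exact h
    | exact h.filter_mono (by rw [nhds_prod_eq])

lemma base_case {φ x u a : ℝ → ℝ} (hφ : ContDiff ℝ (⊤ : ℕ∞) φ)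
    (hx : ContDiff ℝ (⊤ : ℕ∞) x) (hu : ContDiff ℝ (⊤ : ℕ∞) u) (ha : ContDiff ℝ (⊤ : ℕ∞) a)
    (K : Set ℝ) (hK : IsCompact K) (ε : ℝ) (hε : 0 < ε) :
    ∀ᶠ t in 𝓝[≠] (0 : ℝ), ∀ s ∈ K, |QQ φ x u t s * a s| < ε := by
  have c1 := (smooth_deriv hφ).continuous
  have c2 := hx.continuous
  have c3 := hu.continuous
  have c4 := ha.continuous
  have h := unif_small
    (fun t s => (deriv φ (x s + t * u s) * u s - deriv φ (x s) * u s) * a s)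
    (by fun_prop) (by simp) K hK (ε / 2) (by positivity)
  obtain ⟨δ, hδ, hb⟩ := Metric.eventually_nhds_iff_ball.1 h
  have hball : ∀ᶠ t in 𝓝[≠] (0 : ℝ), t ∈ Metric.ball (0 : ℝ) δ :=
    nhdsWithin_le_nhds (Metric.ball_mem_nhds _ hδ)
  filter_upwards [hball, self_mem_nhdsWithin] with t ht ht0 s hs
  have ht0 : t ≠ 0 := ht0
  have key := (convex_ball (0 : ℝ) δ).norm_image_sub_le_of_norm_hasDerivWithin_le
    (f := fun τ => (φ (x s + τ * u s) - τ * (deriv φ (x s) * u s)) * a s)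
    (f' := fun τ => (deriv φ (x s + τ * u s) * u s - deriv φ (x s) * u s) * a s)
    (C := ε / 2) (x := 0) (y := t)
    (fun τ _ => by
      have h1 : HasDerivAt (fun τ : ℝ => x s + τ * u s) (u s) τ := by
        simpa using ((hasDerivAt_id τ).mul_const (u s)).const_add (x s)
      have h2 := (smooth_hasDerivAt hφ (x s + τ * u s)).comp τ h1
      have h3 : HasDerivAt (fun τ : ℝ => τ * (deriv φ (x s) * u s)) (deriv φ (x s) * u s) τ := by
        simpa using (hasDerivAt_id τ).mul_const (deriv φ (x s) * u s)
      exact ((h2.sub h3).mul_const (a s)).hasDerivWithinAt)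
    (fun τ hτ => (hb τ hτ s hs).le) (Metric.mem_ball_self hδ) ht
  have e : QQ φ x u t s * a s = ((φ (x s + t * u s) - t * (deriv φ (x s) * u s)) * a s
      - (φ (x s + 0 * u s) - 0 * (deriv φ (x s) * u s)) * a s) / t := by
    unfold QQ
    field_simp
    ring_nf
  rw [e, abs_div, div_lt_iff₀ (abs_pos.2 ht0)]
  have : 0 < |t| := abs_pos.2 ht0
  simp only [Real.norm_eq_abs, sub_zero] at key
  nlinarith

lemma deriv_QQ {φ x u a : ℝ → ℝ} (hφ : ContDiff ℝ (⊤ : ℕ∞) φ)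
    (hx : ContDiff ℝ (⊤ : ℕ∞) x) (hu : ContDiff ℝ (⊤ : ℕ∞) u) (ha : ContDiff ℝ (⊤ : ℕ∞) a)
    (t : ℝ) (ht : t ≠ 0) :
    deriv (fun s => QQ φ x u t s * a s) = fun s =>
      (QQ (deriv φ) x u t s * (deriv x s * a s) + t * (QQ (deriv φ) x u t s * (deriv u s * a s)))
      + (t * (deriv (deriv φ) (x s) * u s * deriv u s * a s) + QQ φ x u t s * deriv a s) := by
  funext s
  have hxs := smooth_hasDerivAt hx s
  have hus := smooth_hasDerivAt hu s
  have h1 := (smooth_hasDerivAt hφ (x s + t * u s)).comp s (hxs.add (hus.const_mul t))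
  have h2 := (smooth_hasDerivAt hφ (x s)).comp s hxs
  have h3 := ((smooth_hasDerivAt (smooth_deriv hφ) (x s)).comp s hxs).mul hus
  have h4 := (((h1.sub h2).div_const t).sub h3).mul (smooth_hasDerivAt ha s)
  refine (h4.deriv.trans ?_)
  simp only [QQ, Function.comp, Pi.sub_apply, Pi.mul_apply, Pi.add_apply]
  field_simp
  ring

lemma main_ind (l : ℕ) : ∀ {φ x u a : ℝ → ℝ}, ContDiff ℝ (⊤ : ℕ∞) φ →
    ContDiff ℝ (⊤ : ℕ∞) x → ContDiff ℝ (⊤ : ℕ∞) u → ContDiff ℝ (⊤ : ℕ∞) a →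
    ∀ (K : Set ℝ), IsCompact K → ∀ (ε : ℝ), 0 < ε →
    ∀ᶠ t in 𝓝[≠] (0 : ℝ), ∀ s ∈ K,
      |iteratedDeriv l (fun s => QQ φ x u t s * a s) s| < ε := by
  induction l with
  | zero =>
    intro φ x u a hφ hx hu ha K hK ε hε
    simpa using base_case hφ hx hu ha K hK ε hε
  | succ l ih =>
    intro φ x u a hφ hx hu ha K hK ε hε
    have hφ' := smooth_deriv hφ
    have hx' := smooth_deriv hx
    have hu' := smooth_deriv hu
    have ha' := smooth_deriv ha
    have hb : ContDiff ℝ (⊤ : ℕ∞) (fun s => deriv (deriv φ) (x s) * u s * deriv u s * a s) :=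
      ((((smooth_deriv hφ').comp hx).mul hu).mul hu').mul ha
    have e4 : 0 < ε / 4 := by positivity
    have E1 := ih hφ' hx hu (hx'.mul ha) K hK (ε / 4) e4
    have E2 := ih hφ' hx hu (hu'.mul ha) K hK (ε / 4) e4
    have E4 := ih hφ hx hu ha' K hK (ε / 4) e4
    have hbl : Continuous (iteratedDeriv l
        (fun s => deriv (deriv φ) (x s) * u s * deriv u s * a s)) :=
      hb.continuous_iteratedDeriv l (by exact_mod_cast le_top)
    have E3 := (unif_small (fun t s => t * iteratedDeriv l
        (fun s => deriv (deriv φ) (x s) * u s * deriv u s * a s) s)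
        (by fun_prop) (by simp) K hK (ε / 4) e4).filter_mono
        (nhdsWithin_le_nhds (s := {0}ᶜ))
    have E5 : ∀ᶠ t in 𝓝[≠] (0 : ℝ), t ∈ Metric.ball (0 : ℝ) 1 :=
      nhdsWithin_le_nhds (Metric.ball_mem_nhds _ one_pos)
    filter_upwards [E1, E2, E3, E4, E5, self_mem_nhdsWithin] with t T1 T2 T3 T4 T5 ht0 s hs
    have T1 := T1 s hs
    have T2 := T2 s hs
    have T3 := T3 s hs
    have T4 := T4 s hs
    rw [iteratedDeriv_succ', deriv_QQ hφ hx hu ha t ht0]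
    have s1 := (QQ_smooth hφ' hx hu t).mul (hx'.mul ha)
    have s2 := (QQ_smooth hφ' hx hu t).mul (hu'.mul ha)
    have s2' := (contDiff_const (c := t)).mul s2
    have s3' := (contDiff_const (c := t)).mul hb
    have s4 := (QQ_smooth hφ hx hu t).mul ha'
    have lt : ((l : ℕ) : WithTop ℕ∞) ≤ ((⊤ : ℕ∞) : WithTop ℕ∞) := by exact_mod_cast le_top
    rw [iteratedDeriv_fun_add ((s1.add s2').of_le lt).contDiffAt ((s3'.add s4).of_le lt).contDiffAt,
      iteratedDeriv_fun_add (s1.of_le lt).contDiffAt (s2'.of_le lt).contDiffAt,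
      iteratedDeriv_fun_add (s3'.of_le lt).contDiffAt (s4.of_le lt).contDiffAt,
      iteratedDeriv_const_mul_field, iteratedDeriv_const_mul_field]
    have T5 : |t| < 1 := by simpa using T5
    have T2' := mul_le_mul T5.le T2.le (abs_nonneg _) zero_le_one
    rw [← abs_mul, one_mul] at T2'
    rw [abs_lt] at *
    rw [abs_le] at T2'
    constructor <;> linarith [T1.1, T1.2, T3.1, T3.2, T4.1, T4.2, T2'.1, T2'.2]


/-- Non-periodic version of Lemma 8: for smooth `φ, x, u` the difference quotients of
`x ↦ φ ∘ x` converge to `(φ' ∘ x) · u` uniformly on every compact set, together with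
all derivatives up to any fixed order `k`. -/
theorem stmt4 (φ : ℝ → ℝ) (hφ : ContDiff ℝ (⊤ : ℕ∞) φ)
    (x u : ℝ → ℝ) (hx : ContDiff ℝ (⊤ : ℕ∞) x) (hu : ContDiff ℝ (⊤ : ℕ∞) u) :
    ∀ K : Set ℝ, IsCompact K → ∀ k : ℕ, ∀ ε : ℝ, 0 < ε → ∃ δ : ℝ, 0 < δ ∧
      ∀ t : ℝ, 0 < |t| → |t| < δ → ∀ l : ℕ, l ≤ k → ∀ s ∈ K,
        |iteratedDeriv l
          (fun s => (φ (x s + t * u s) - φ (x s)) / t - deriv φ (x s) * u s) s| < ε := by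
  intro K hK k ε hε
  have h : ∀ᶠ t in 𝓝[≠] (0 : ℝ), ∀ l ∈ Set.Iic k, ∀ s ∈ K,
      |iteratedDeriv l (fun s => QQ φ x u t s * (1 : ℝ)) s| < ε :=
    (eventually_all_finite (Set.finite_Iic k)).2 fun l _ =>
      main_ind l hφ hx hu (contDiff_const (c := (1 : ℝ))) K hK ε hε
  rw [eventually_nhdsWithin_iff] at h
  obtain ⟨δ, hδ, hb⟩ := Metric.eventually_nhds_iff_ball.1 h
  refine ⟨δ, hδ, fun t ht0 ht l hl s hs => ?_⟩
  have := hb t (by simpa using ht) (abs_pos.1 ht0) l hl s hs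
  simpa only [mul_one, QQ] using this
end

section
/- Let φ : ℝ → ℝ be infinitely differentiable, let s₀ ∈ ℝ and let i₀ ∈ ℕ, and set i = i₀ + 1. Then there exists M₂ ≥ 0 such that for every infinitely differentiable u : ℝ → ℝ whose derivatives up to order i₀ are bounded by 1 (i.e. N := sup over s ∈ ℝ and l ≤ i₀ of |iteratedDeriv l u s| satisfies N ≤ 1) and for every s ∈ ℝ, one has |iteratedDeriv i (fun s => deriv φ (s₀ + u s)) s| ≥ |deriv (deriv φ) (s₀ + u s)| · |iteratedDeriv i u s| − M₂ · (1 + N)^i. -/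
/-- Inequality (4) in the proof of Theorem 11: a Faà di Bruno type lower bound
`|D^i (φ' ∘ (s₀ + u))| ≥ |φ'' ∘ (s₀ + u)| · |D^i u| − M₂ (1 + N)^i` with `i = i₀ + 1`,
where `N` bounds the derivatives of `u` up to order `i₀`, `N ≤ 1`, and `M₂` depends
only on `φ`, `s₀` and `i₀`. -/
theorem stmt5 (φ : ℝ → ℝ) (hφ : ContDiff ℝ (⊤ : ℕ∞) φ) (s₀ : ℝ) (i₀ : ℕ) :
    ∃ M₂ : ℝ, 0 ≤ M₂ ∧
      ∀ u : ℝ → ℝ, ContDiff ℝ (⊤ : ℕ∞) u →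
        ∀ N : ℝ, (∀ l : ℕ, l ≤ i₀ → ∀ s : ℝ, |iteratedDeriv l u s| ≤ N) → N ≤ 1 →
          ∀ s : ℝ,
            |iteratedDeriv (i₀ + 1) (fun s => deriv φ (s₀ + u s)) s| ≥
              |deriv (deriv φ) (s₀ + u s)| * |iteratedDeriv (i₀ + 1) u s| -
                M₂ * (1 + N) ^ (i₀ + 1) := by
  have hdφ : ContDiff ℝ (⊤ : ℕ∞) (deriv φ) := (contDiff_infty_iff_deriv.1 hφ).2
  have hddφ : ContDiff ℝ (⊤ : ℕ∞) (deriv (deriv φ)) := (contDiff_infty_iff_deriv.1 hdφ).2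
  set g : ℝ → ℝ := fun x => deriv (deriv φ) (s₀ + x) with hg
  have hgs : ContDiff ℝ (⊤ : ℕ∞) g := hddφ.comp (contDiff_const.add contDiff_id)
  have hB : ∀ k : ℕ, ∃ C : ℝ, ∀ x ∈ Set.Icc (-1 : ℝ) 1, ‖iteratedFDeriv ℝ k g x‖ ≤ C := fun k =>
    isCompact_Icc.exists_bound_of_continuousOn
      (hgs.continuous_iteratedFDeriv (m := k) (by exact_mod_cast le_top)).continuousOn
  choose B hB using hB
  set C : ℝ := ∑ k ∈ Finset.range (i₀ + 1), |B k| with hC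
  have hC0 : 0 ≤ C := Finset.sum_nonneg fun _ _ => abs_nonneg _
  have hBC : ∀ k, k ≤ i₀ → ∀ x ∈ Set.Icc (-1 : ℝ) 1, ‖iteratedFDeriv ℝ k g x‖ ≤ C := by
    intro k hk x hx
    refine (hB k x hx).trans ((le_abs_self _).trans ?_)
    exact Finset.single_le_sum (f := fun k => |B k|) (fun _ _ => abs_nonneg _)
      (Finset.mem_range.2 (by omega))
  refine ⟨∑ k ∈ Finset.range i₀, (i₀.choose (k + 1) : ℝ) * (((k + 1).factorial : ℝ) * C),
    Finset.sum_nonneg fun _ _ => by positivity, ?_⟩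
  intro u hu N hN hN1 s
  have hN0 : 0 ≤ N := (abs_nonneg _).trans (hN 0 (Nat.zero_le _) s)
  have hgu : ContDiff ℝ (⊤ : ℕ∞) (g ∘ u) := hgs.comp hu
  have hdu : ContDiff ℝ (⊤ : ℕ∞) (deriv u) := (contDiff_infty_iff_deriv.1 hu).2
  have hd : deriv (fun s => deriv φ (s₀ + u s)) = (g ∘ u) * deriv u := by
    funext t
    have h1 : HasDerivAt (fun s => s₀ + u s) (deriv u t) t :=
      ((hu.differentiable (by simp)) t).hasDerivAt.const_add s₀
    have h2 : HasDerivAt (deriv φ) (deriv (deriv φ) (s₀ + u t)) (s₀ + u t) :=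
      ((hdφ.differentiable (by simp)) _).hasDerivAt
    exact (h2.comp t h1).deriv
  have hus : u s ∈ Set.Icc (-1 : ℝ) 1 := by
    have := hN 0 (Nat.zero_le _) s
    rw [iteratedDeriv_zero] at this
    exact abs_le.1 (this.trans hN1)
  have hcomp : ∀ k, k ≤ i₀ → |iteratedDeriv k (g ∘ u) s| ≤ (k.factorial : ℝ) * C := by
    intro k hk
    have h := norm_iteratedFDeriv_comp_le (𝕜 := ℝ) (n := k) (N := ((⊤ : ℕ∞) : WithTop ℕ∞)) hgs hu
      (by exact_mod_cast le_top) s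
      (C := C) (D := 1) (fun i hi => hBC i (hi.trans hk) _ hus) (fun i _ hi => by
        rw [norm_iteratedFDeriv_eq_norm_iteratedDeriv, one_pow, Real.norm_eq_abs]
        exact (hN i (hi.trans hk) s).trans hN1)
    rw [norm_iteratedFDeriv_eq_norm_iteratedDeriv, Real.norm_eq_abs] at h
    simpa using h
  have hL : iteratedDeriv (i₀ + 1) (fun s => deriv φ (s₀ + u s)) s =
      (∑ k ∈ Finset.range i₀, (i₀.choose (k + 1) : ℝ) * iteratedDeriv (k + 1) (g ∘ u) s *
        iteratedDeriv (i₀ - (k + 1)) (deriv u) s) +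
      deriv (deriv φ) (s₀ + u s) * iteratedDeriv (i₀ + 1) u s := by
    rw [iteratedDeriv_succ', hd, iteratedDeriv_mul
      (hgu.contDiffAt.of_le (by exact_mod_cast le_top))
      (hdu.contDiffAt.of_le (by exact_mod_cast le_top)), Finset.sum_range_succ',
      iteratedDeriv_succ']
    simp [hg]
  have hR : |∑ k ∈ Finset.range i₀, (i₀.choose (k + 1) : ℝ) * iteratedDeriv (k + 1) (g ∘ u) s *
        iteratedDeriv (i₀ - (k + 1)) (deriv u) s| ≤
      ∑ k ∈ Finset.range i₀, (i₀.choose (k + 1) : ℝ) * (((k + 1).factorial : ℝ) * C) := by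
    refine (Finset.abs_sum_le_sum_abs _ _).trans (Finset.sum_le_sum fun k hk => ?_)
    have hk' := Finset.mem_range.1 hk
    rw [abs_mul, abs_mul, Nat.abs_cast, ← iteratedDeriv_succ']
    have h1 := hcomp (k + 1) (by omega)
    have h2 := (hN (i₀ - (k + 1) + 1) (by omega) s).trans hN1
    calc _ ≤ (i₀.choose (k + 1) : ℝ) * (((k + 1).factorial : ℝ) * C) * 1 := by gcongr
      _ = _ := mul_one _
  set M := ∑ k ∈ Finset.range i₀, (i₀.choose (k + 1) : ℝ) * (((k + 1).factorial : ℝ) * C)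
  have hM : M ≤ M * (1 + N) ^ (i₀ + 1) :=
    le_mul_of_one_le_right ((abs_nonneg _).trans hR) (one_le_pow₀ (by linarith))
  rw [hL, ← abs_mul]
  set R := ∑ k ∈ Finset.range i₀, (i₀.choose (k + 1) : ℝ) * iteratedDeriv (k + 1) (g ∘ u) s *
        iteratedDeriv (i₀ - (k + 1)) (deriv u) s
  set T := deriv (deriv φ) (s₀ + u s) * iteratedDeriv (i₀ + 1) u s
  have h3 : |T| ≤ |R + T| + |R| := by
    have := abs_sub (R + T) R
    simpa using this
  linarith
end

section
/- Let i₀ ∈ ℕ be even, let n ∈ ℕ with n ≥ 1, let s₀ ∈ ℝ, and define u : ℝ → ℝ by u s = (2πn)^(−i₀−1/2) · sin(2πn(s − s₀)). Then u is infinitely differentiable and 1-periodic, the supremum over s ∈ ℝ and l ≤ i₀ of |iteratedDeriv l u s| equals (2πn)^(−1/2), and |iteratedDeriv (i₀+1) u s₀| = (2πn)^(1/2). -/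
open Real

/-- The test function `u s = (2πn)^(−i₀−1/2) sin(2πn(s−s₀))` used in the proof of
Theorem 11: it is smooth and 1-periodic, its `C^{i₀}` sup-seminorm equals
`(2πn)^(−1/2)`, and its `(i₀+1)`-st derivative at `s₀` has absolute value `(2πn)^(1/2)`. -/
theorem stmt6 (i₀ : ℕ) (hi₀ : Even i₀) (n : ℕ) (hn : 1 ≤ n) (s₀ : ℝ)
    (u : ℝ → ℝ)
    (hu : ∀ s : ℝ, u s = (2 * π * n) ^ (-(i₀ : ℝ) - 1 / 2) * Real.sin (2 * π * n * (s - s₀))) :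
    ContDiff ℝ (⊤ : ℕ∞) u ∧ (∀ s : ℝ, u (s + 1) = u s) ∧
      IsLUB {r : ℝ | ∃ l : ℕ, l ≤ i₀ ∧ ∃ s : ℝ, r = |iteratedDeriv l u s|}
        ((2 * π * n) ^ (-(1 : ℝ) / 2)) ∧
      |iteratedDeriv (i₀ + 1) u s₀| = (2 * π * n) ^ ((1 : ℝ) / 2) := by
  have hn' : (1 : ℝ) ≤ n := by exact_mod_cast hn
  have ha : (1 : ℝ) ≤ 2 * π * n := by nlinarith [Real.pi_gt_three]
  have ha0 : (0 : ℝ) < 2 * π * n := by linarith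
  have hD : ∀ l : ℕ, iteratedDeriv l u = fun s =>
      (2 * π * n) ^ (-(i₀ : ℝ) - 1 / 2 + l) * Real.sin (2 * π * n * (s - s₀) + l * (π / 2)) := by
    intro l
    induction l with
    | zero => funext s; simp [hu]
    | succ l ih =>
      rw [iteratedDeriv_succ, ih]
      funext s
      have h1 : HasDerivAt (fun s : ℝ => 2 * π * n * (s - s₀) + l * (π / 2))
          (2 * π * n * 1) s :=
        (((hasDerivAt_id s).sub_const s₀).const_mul (2 * π * (n : ℝ))).add_const _
      rw [(h1.sin.const_mul _).deriv]
      have h2 : 2 * π * n * (s - s₀) + ((l + 1 : ℕ) : ℝ) * (π / 2)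
          = (2 * π * n * (s - s₀) + l * (π / 2)) + π / 2 := by push_cast; ring
      have h3 : -(i₀ : ℝ) - 1 / 2 + ((l + 1 : ℕ) : ℝ) = (-(i₀ : ℝ) - 1 / 2 + l) + 1 := by
        push_cast; ring
      rw [h2, Real.sin_add_pi_div_two, h3, Real.rpow_add ha0 _ 1, Real.rpow_one]
      ring
  have habs : ∀ (l : ℕ) (s : ℝ), |iteratedDeriv l u s| =
      (2 * π * n) ^ (-(i₀ : ℝ) - 1 / 2 + l) *
        |Real.sin (2 * π * n * (s - s₀) + l * (π / 2))| := by
    intro l s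
    rw [hD, abs_mul, abs_of_pos (Real.rpow_pos_of_pos ha0 _)]
  obtain ⟨k, hk⟩ := hi₀
  have hk' : (i₀ : ℝ) * (π / 2) = k * π := by rw [hk]; push_cast; ring
  refine ⟨?_, ?_, ⟨?_, ?_⟩, ?_⟩
  · rw [funext hu]
    fun_prop
  · intro s
    rw [hu, hu, show 2 * π * n * (s + 1 - s₀) = 2 * π * n * (s - s₀) + n * (2 * π) by ring,
      Real.sin_add_nat_mul_two_pi]
  · rintro r ⟨l, hl, s, rfl⟩
    rw [habs]
    have hl' : (l : ℝ) ≤ i₀ := by exact_mod_cast hl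
    calc _ ≤ (2 * π * n) ^ (-(i₀ : ℝ) - 1 / 2 + l) * 1 := by
          gcongr
          exact Real.abs_sin_le_one _
      _ ≤ _ := by
          rw [mul_one]
          exact Real.rpow_le_rpow_of_exponent_le ha (by linarith)
  · intro b hb
    apply hb
    refine ⟨i₀, le_rfl, s₀ + (π / 2) / (2 * π * n), ?_⟩
    rw [habs, hk', show 2 * π * n * (s₀ + (π / 2) / (2 * π * n) - s₀) = π / 2 by
      rw [add_sub_cancel_left, mul_div_cancel₀ _ ha0.ne'], add_comm (π / 2),
      Real.sin_add_pi_div_two, Real.cos_nat_mul_pi, abs_neg_one_pow, mul_one]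
    congr 1; ring
  · rw [habs, sub_self, mul_zero, zero_add,
      show ((i₀ + 1 : ℕ) : ℝ) * (π / 2) = k * π + π / 2 by rw [← hk']; push_cast; ring,
      Real.sin_add_pi_div_two, Real.cos_nat_mul_pi, abs_neg_one_pow, mul_one]
    congr 1; push_cast; ring
end

section
/- Let b₀ : ℝ → ℝ be defined by b₀ s = 1 for |s| ≤ 1, b₀ s = (1 + Real.exp(((2 − |s|)^2 − 1)⁻¹ · (2 − |s|)))⁻¹ for 1 < |s| < 3, and b₀ s = 0 for |s| ≥ 3. Let N ≥ 1, let α : Fin N → ℕ be a multi-index, let 0 < δ ≤ 1, and define f : (Fin N → ℝ) → ℝ by f η = (∏_{i} b₀(δ⁻¹ · η i)) · (∏_{i} (η i)^(α i)). Then for every multi-index κ : Fin N → ℕ, the iterated partial derivative ∂^κ f (taking κ i one-variable partial derivatives in the i-th coordinate) evaluated at 0 equals ∏_{i} (α i)! if κ = α, and equals 0 otherwise. -/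
/-- The partial derivative of `f : ℝ^N → ℝ` in the `i`-th coordinate. -/
noncomputable def partialDerivCoord {N : ℕ} (i : Fin N) (f : (Fin N → ℝ) → ℝ) :
    (Fin N → ℝ) → ℝ :=
  fun η => deriv (fun t : ℝ => f (Function.update η i t)) (η i)

/-- The iterated partial derivative `∂^κ f` of `f : ℝ^N → ℝ` associated to a
multi-index `κ : Fin N → ℕ`: one differentiates `κ i` times in the `i`-th
coordinate, for `i = N-1, …, 0` (the order is immaterial for smooth `f`). -/
noncomputable def multiPartialDeriv {N : ℕ} (κ : Fin N → ℕ) (f : (Fin N → ℝ) → ℝ) :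
    (Fin N → ℝ) → ℝ :=
  (List.finRange N).foldr (fun i g => (partialDerivCoord i)^[κ i] g) f

lemma partialDerivCoord_prod {N : ℕ} (i : Fin N) (h : Fin N → ℝ → ℝ) :
    partialDerivCoord i (fun η => ∏ j, h j (η j)) =
      fun η => ∏ j, (Function.update h i (deriv (h i))) j (η j) := by
  funext η
  unfold partialDerivCoord
  have e : (fun t : ℝ => ∏ j, h j (Function.update η i t j)) =
      fun t => (∏ j ∈ Finset.univ.erase i, h j (η j)) * h i t := by
    funext t
    rw [← Finset.prod_erase_mul _ _ (Finset.mem_univ i)]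
    congr 1
    · refine Finset.prod_congr rfl fun j hj => ?_
      rw [Function.update_of_ne (Finset.ne_of_mem_erase hj)]
    · rw [Function.update_self]
  rw [e, deriv_const_mul_field, ← Finset.prod_erase_mul _ _ (Finset.mem_univ i)]
  congr 1
  · refine Finset.prod_congr rfl fun j hj => ?_
    rw [Function.update_of_ne (Finset.ne_of_mem_erase hj)]
  · rw [Function.update_self]

lemma partialDerivCoord_iter_prod {N : ℕ} (i : Fin N) (k : ℕ) (h : Fin N → ℝ → ℝ) :
    (partialDerivCoord i)^[k] (fun η => ∏ j, h j (η j)) =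
      fun η => ∏ j, (Function.update h i (deriv^[k] (h i))) j (η j) := by
  induction k with
  | zero => simp
  | succ k ih =>
    rw [Function.iterate_succ_apply', ih, partialDerivCoord_prod, Function.update_self,
      Function.update_idem, Function.iterate_succ_apply']

lemma foldr_prod {N : ℕ} (κ : Fin N → ℕ) (h : Fin N → ℝ → ℝ) (l : List (Fin N))
    (hl : l.Nodup) :
    l.foldr (fun i g => (partialDerivCoord i)^[κ i] g) (fun η => ∏ j, h j (η j)) =
      fun η => ∏ j, (if j ∈ l then deriv^[κ j] (h j) else h j) (η j) := by
  induction l with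
  | nil => simp
  | cons a l ih =>
    rw [List.nodup_cons] at hl
    rw [List.foldr_cons, ih hl.2,
      partialDerivCoord_iter_prod a (κ a) (fun j => if j ∈ l then deriv^[κ j] (h j) else h j)]
    funext η
    refine Finset.prod_congr rfl fun j _ => ?_
    by_cases hj : j = a
    · subst hj
      simp [hl.1]
    · simp [hj]

/-- First claim of Remarks 5(a): for the bump-times-monomial function
`f η = (∏ i, b₀(δ⁻¹ η i)) · ∏ i, (η i)^(α i)`, the iterated partial derivative
`∂^κ f` at `0` equals `∏ i, (α i)!` if `κ = α` and `0` otherwise. -/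
theorem stmt8 (b₀ : ℝ → ℝ)
    (h1 : ∀ s : ℝ, |s| ≤ 1 → b₀ s = 1)
    (h2 : ∀ s : ℝ, 1 < |s| → |s| < 3 →
      b₀ s = (1 + Real.exp (((2 - |s|) ^ 2 - 1)⁻¹ * (2 - |s|)))⁻¹)
    (h3 : ∀ s : ℝ, 3 ≤ |s| → b₀ s = 0)
    (N : ℕ) (hN : 1 ≤ N) (α : Fin N → ℕ) (δ : ℝ) (hδ : 0 < δ) (hδ1 : δ ≤ 1)
    (f : (Fin N → ℝ) → ℝ)
    (hf : ∀ η : Fin N → ℝ, f η = (∏ i, b₀ (δ⁻¹ * η i)) * ∏ i, (η i) ^ (α i)) :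
    ∀ κ : Fin N → ℕ,
      multiPartialDeriv κ f (0 : Fin N → ℝ) =
        if κ = α then (∏ i, ((α i).factorial : ℝ)) else 0 := by
  intro κ
  let g : Fin N → ℝ → ℝ := fun i t => b₀ (δ⁻¹ * t) * t ^ (α i)
  have hfg : f = fun η => ∏ j, g j (η j) := by
    funext η
    rw [hf, ← Finset.prod_mul_distrib]
  have key : ∀ i, deriv^[κ i] (g i) 0 = if κ i = α i then ((α i).factorial : ℝ) else 0 := by
    intro i
    have he : g i =ᶠ[nhds 0] fun t => t ^ (α i) := by
      filter_upwards [Metric.ball_mem_nhds (0 : ℝ) hδ] with t ht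
      have ht' : |t| < δ := by simpa using ht
      have hb : b₀ (δ⁻¹ * t) = 1 := by
        apply h1
        rw [abs_mul, abs_inv, abs_of_pos hδ, inv_mul_le_iff₀ hδ]
        linarith
      simp [g, hb]
    rw [← iteratedDeriv_eq_iterate, he.iteratedDeriv_eq, iteratedDeriv_fun_pow_zero]
    push_cast
    rfl
  have hm : multiPartialDeriv κ f 0 = ∏ j, deriv^[κ j] (g j) 0 := by
    unfold multiPartialDeriv
    rw [hfg, foldr_prod κ g _ (List.nodup_finRange N)]
    simp
  rw [hm, Finset.prod_congr rfl fun j _ => key j]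
  split_ifs with h
  · subst h
    simp
  · obtain ⟨i, hi⟩ := Function.ne_iff.mp h
    exact Finset.prod_eq_zero (Finset.mem_univ i) (if_neg hi)
end

section
/- Let b₀ : ℝ → ℝ be defined by b₀ s = 1 for |s| ≤ 1, b₀ s = (1 + Real.exp(((2 − |s|)^2 − 1)⁻¹ · (2 − |s|)))⁻¹ for 1 < |s| < 3, and b₀ s = 0 for |s| ≥ 3. Let N ≥ 1 and let α : Fin N → ℕ be a multi-index. Then there exists M ≥ 0 such that for every δ with 0 < δ ≤ 1, every multi-index κ : Fin N → ℕ with κ i ≤ α i for all i, and every η : Fin N → ℝ, the function f η = (∏_{i} b₀(δ⁻¹ · η i)) · (∏_{i} (η i)^(α i)) satisfies |∂^κ f (η)| ≤ δ^(|α| − |κ|) · M, where |α| = ∑_i α i and |κ| = ∑_i κ i. -/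
open scoped ContDiff

theorem aux_partial {N : ℕ} (j : Fin N) (g : Fin N → ℝ → ℝ) :
    partialDerivCoord j (fun η => ∏ i, g i (η i)) =
      fun η => ∏ i, (Function.update g j (deriv (g j))) i (η i) := by
  funext η
  unfold partialDerivCoord
  have h : (fun t : ℝ => ∏ i, g i (Function.update η j t i)) =
      fun t => (∏ i ∈ Finset.univ.erase j, g i (η i)) * g j t := by
    funext t
    rw [← Finset.prod_erase_mul _ _ (Finset.mem_univ j)]
    congr 1
    · refine Finset.prod_congr rfl fun i hi => ?_
      rw [Function.update_of_ne (Finset.ne_of_mem_erase hi)]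
    · simp
  rw [h, deriv_const_mul_field, ← Finset.prod_erase_mul _ _ (Finset.mem_univ j)]
  congr 1
  · refine Finset.prod_congr rfl fun i hi => ?_
    rw [Function.update_of_ne (Finset.ne_of_mem_erase hi)]
  · simp

theorem aux_iter {N : ℕ} (j : Fin N) (g : Fin N → ℝ → ℝ) (n : ℕ) :
    (partialDerivCoord j)^[n] (fun η => ∏ i, g i (η i)) =
      fun η => ∏ i, (Function.update g j (iteratedDeriv n (g j))) i (η i) := by
  induction n with
  | zero => simp
  | succ n ih =>
    rw [Function.iterate_succ_apply', ih, aux_partial]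
    simp [iteratedDeriv_succ]

theorem aux_fold {N : ℕ} (κ : Fin N → ℕ) (g : Fin N → ℝ → ℝ) (l : List (Fin N))
    (hl : l.Nodup) :
    l.foldr (fun i g => (partialDerivCoord i)^[κ i] g) (fun η => ∏ i, g i (η i)) =
      fun η => ∏ i, (if i ∈ l then iteratedDeriv (κ i) (g i) else g i) (η i) := by
  induction l with
  | nil => simp
  | cons j l ih =>
    rw [List.nodup_cons] at hl
    rw [List.foldr_cons, ih hl.2,
      aux_iter j (fun i => if i ∈ l then iteratedDeriv (κ i) (g i) else g i)]
    funext η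
    refine Finset.prod_congr rfl fun i _ => ?_
    by_cases h : i = j
    · subst h
      simp [hl.1]
    · simp [h]

theorem aux_multi {N : ℕ} (κ : Fin N → ℕ) (g : Fin N → ℝ → ℝ) :
    multiPartialDeriv κ (fun η => ∏ i, g i (η i)) =
      fun η => ∏ i, iteratedDeriv (κ i) (g i) (η i) := by
  unfold multiPartialDeriv
  rw [aux_fold κ g _ (List.nodup_finRange N)]
  simp

/-- One-sided smooth step. -/
noncomputable def auxStep (s : ℝ) : ℝ :=
  expNegInvGlue (2 * (3 - s)) / (expNegInvGlue (2 * (3 - s)) + expNegInvGlue (2 * (s - 1)))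

theorem auxStep_den (s : ℝ) :
    0 < expNegInvGlue (2 * (3 - s)) + expNegInvGlue (2 * (s - 1)) := by
  rcases lt_or_ge s 3 with h | h
  · exact add_pos_of_pos_of_nonneg (expNegInvGlue.pos_of_pos (by linarith))
      (expNegInvGlue.nonneg _)
  · exact add_pos_of_nonneg_of_pos (expNegInvGlue.nonneg _)
      (expNegInvGlue.pos_of_pos (by linarith))

theorem auxStep_contDiff : ContDiff ℝ ∞ auxStep := by
  unfold auxStep
  have hg : ContDiff ℝ ∞ expNegInvGlue := expNegInvGlue.contDiff
  refine ContDiff.div (hg.comp (by fun_prop)) ((hg.comp (by fun_prop)).add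
    (hg.comp (by fun_prop))) fun s => (auxStep_den s).ne'

theorem auxStep_one {s : ℝ} (h : s ≤ 1) : auxStep s = 1 := by
  have hd := auxStep_den s
  unfold auxStep
  rw [expNegInvGlue.zero_of_nonpos (x := 2 * (s - 1)) (by linarith)] at *
  rw [add_zero] at *
  exact div_self hd.ne'

theorem auxStep_zero {s : ℝ} (h : 3 ≤ s) : auxStep s = 0 := by
  unfold auxStep
  rw [expNegInvGlue.zero_of_nonpos (x := 2 * (3 - s)) (by linarith)]
  simp

theorem auxStep_mid {s : ℝ} (ha : 1 < s) (hb : s < 3) :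
    auxStep s = (1 + Real.exp (((2 - s) ^ 2 - 1)⁻¹ * (2 - s)))⁻¹ := by
  unfold auxStep expNegInvGlue
  rw [if_neg (by linarith), if_neg (by linarith)]
  have e : Real.exp (-(2 * (s - 1))⁻¹) =
      Real.exp (-(2 * (3 - s))⁻¹) * Real.exp (((2 - s) ^ 2 - 1)⁻¹ * (2 - s)) := by
    rw [← Real.exp_add]
    congr 1
    have h1 : s - 1 ≠ 0 := by linarith
    have h2 : 3 - s ≠ 0 := by linarith
    have h3 : (2 - s) ^ 2 - 1 = -((s - 1) * (3 - s)) := by ring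
    rw [h3]
    field_simp
    ring
  rw [e]
  have := Real.exp_pos (-(2 * (3 - s))⁻¹)
  have := Real.exp_pos (((2 - s) ^ 2 - 1)⁻¹ * (2 - s))
  field_simp

theorem aux_b (b₀ : ℝ → ℝ)
    (h1 : ∀ s : ℝ, |s| ≤ 1 → b₀ s = 1)
    (h2 : ∀ s : ℝ, 1 < |s| → |s| < 3 →
      b₀ s = (1 + Real.exp (((2 - |s|) ^ 2 - 1)⁻¹ * (2 - |s|)))⁻¹)
    (h3 : ∀ s : ℝ, 3 ≤ |s| → b₀ s = 0) : b₀ = fun s => auxStep s * auxStep (-s) := by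
  have key : ∀ s, b₀ s = auxStep |s| := by
    intro s
    rcases le_or_gt |s| 1 with h | h
    · rw [h1 s h, auxStep_one h]
    · rcases lt_or_ge |s| 3 with h' | h'
      · rw [h2 s h h', auxStep_mid h h']
      · rw [h3 s h', auxStep_zero h']
  funext s
  rw [key]
  rcases le_total 0 s with h | h
  · rw [abs_of_nonneg h, auxStep_one (s := -s) (by linarith), mul_one]
  · rw [abs_of_nonpos h, auxStep_one (s := s) (by linarith), one_mul]

theorem aux_bound_s9 (b₀ : ℝ → ℝ) (hb : ContDiff ℝ ∞ b₀)
    (h3 : ∀ s : ℝ, 3 ≤ |s| → b₀ s = 0) (a k : ℕ) :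
    ∃ C : ℝ, 0 ≤ C ∧ ∀ s, |iteratedDeriv k (fun s => b₀ s * s ^ a) s| ≤ C := by
  have hs : HasCompactSupport (fun s => b₀ s * s ^ a) := by
    refine HasCompactSupport.intro (isCompact_Icc (a := (-3 : ℝ)) (b := 3)) fun s hs => ?_
    rw [h3 s, zero_mul]
    by_contra hc
    exact hs (abs_le.1 (not_le.1 hc).le)
  have hc : ContDiff ℝ ∞ (fun s => b₀ s * s ^ a) := hb.mul (by fun_prop)
  have hs' : HasCompactSupport (iteratedDeriv k (fun s => b₀ s * s ^ a)) := by
    induction k with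
    | zero => simpa using hs
    | succ k ih => rw [iteratedDeriv_succ]; exact ih.deriv
  have hcont : Continuous (iteratedDeriv k (fun s => b₀ s * s ^ a)) :=
    hc.continuous_iteratedDeriv k (by exact_mod_cast le_top)
  obtain ⟨C, hC⟩ := hs'.exists_bound_of_continuous hcont
  exact ⟨C, (norm_nonneg _).trans (hC 0), hC⟩

theorem aux_scale (b₀ : ℝ → ℝ) (hb : ContDiff ℝ ∞ b₀) (a k : ℕ) (hk : k ≤ a) (δ : ℝ)
    (hδ : 0 < δ) (t : ℝ) :
    iteratedDeriv k (fun t => b₀ (δ⁻¹ * t) * t ^ a) t =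
      δ ^ (a - k) * iteratedDeriv k (fun s => b₀ s * s ^ a) (δ⁻¹ * t) := by
  have hc : ContDiff ℝ k (fun s => b₀ s * s ^ a) :=
    (hb.of_le (by exact_mod_cast le_top)).mul (by fun_prop)
  have e : (fun t => b₀ (δ⁻¹ * t) * t ^ a) =
      fun t => δ ^ a * (fun s => b₀ s * s ^ a) (δ⁻¹ * t) := by
    funext t
    simp only
    rw [mul_pow, inv_pow]
    field_simp
  rw [e, iteratedDeriv_const_mul_field, iteratedDeriv_comp_const_mul hc]
  simp only
  rw [← mul_assoc, inv_pow, ← pow_sub₀ δ hδ.ne' hk]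

/-- Second claim of Remarks 5(a): there is `M ≥ 0`, independent of the scaling
parameter `δ ∈ (0,1]`, such that for every multi-index `κ ≤ α` and every `η`,
`|∂^κ ((∏ i, b₀(δ⁻¹ η i)) · ∏ i, (η i)^(α i))(η)| ≤ δ^(|α|−|κ|) · M`. -/
theorem stmt9 (b₀ : ℝ → ℝ)
    (h1 : ∀ s : ℝ, |s| ≤ 1 → b₀ s = 1)
    (h2 : ∀ s : ℝ, 1 < |s| → |s| < 3 →
      b₀ s = (1 + Real.exp (((2 - |s|) ^ 2 - 1)⁻¹ * (2 - |s|)))⁻¹)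
    (h3 : ∀ s : ℝ, 3 ≤ |s| → b₀ s = 0)
    (N : ℕ) (hN : 1 ≤ N) (α : Fin N → ℕ) :
    ∃ M : ℝ, 0 ≤ M ∧
      ∀ δ : ℝ, 0 < δ → δ ≤ 1 →
        ∀ κ : Fin N → ℕ, (∀ i : Fin N, κ i ≤ α i) →
          ∀ η : Fin N → ℝ,
            |multiPartialDeriv κ
                (fun η : Fin N → ℝ => (∏ i, b₀ (δ⁻¹ * η i)) * ∏ i, (η i) ^ (α i)) η| ≤
              δ ^ ((∑ i, α i) - (∑ i, κ i)) * M := by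
  have hb : ContDiff ℝ ∞ b₀ := by
    rw [aux_b b₀ h1 h2 h3]
    exact auxStep_contDiff.mul (auxStep_contDiff.comp contDiff_neg)
  choose C hC0 hC using aux_bound_s9 b₀ hb h3
  refine ⟨∏ i, ∑ k ∈ Finset.range (α i + 1), C (α i) k,
    Finset.prod_nonneg fun i _ => Finset.sum_nonneg fun k _ => hC0 _ _, ?_⟩
  intro δ hδ _ κ hκ η
  have e : (fun η : Fin N → ℝ => (∏ i, b₀ (δ⁻¹ * η i)) * ∏ i, (η i) ^ (α i)) =
      fun η => ∏ i, (fun i t => b₀ (δ⁻¹ * t) * t ^ (α i)) i (η i) := by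
    funext η
    rw [← Finset.prod_mul_distrib]
  rw [e, aux_multi κ (fun i t => b₀ (δ⁻¹ * t) * t ^ (α i))]
  have hsum : (∑ i, α i) - (∑ i, κ i) = ∑ i, (α i - κ i) :=
    (Finset.sum_tsub_distrib _ fun i _ => hκ i).symm
  rw [hsum, ← Finset.prod_pow_eq_pow_sum, ← Finset.prod_mul_distrib, Finset.abs_prod]
  refine Finset.prod_le_prod (fun i _ => abs_nonneg _) fun i _ => ?_
  rw [aux_scale b₀ hb (α i) (κ i) (hκ i) δ hδ, abs_mul, abs_of_pos (pow_pos hδ _)]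
  refine mul_le_mul_of_nonneg_left ((hC _ _ _).trans ?_) (pow_pos hδ _).le
  exact Finset.single_le_sum (f := fun k => C (α i) k) (fun k _ => hC0 _ _)
    (Finset.mem_range.2 (Nat.lt_succ_of_le (hκ i)))
end

section
/- Let b₀ : ℝ → ℝ be defined by b₀ s = 1 for |s| ≤ 1, b₀ s = (1 + Real.exp(((2 − |s|)^2 − 1)⁻¹ · (2 − |s|)))⁻¹ for 1 < |s| < 3, and b₀ s = 0 for |s| ≥ 3. Let k ∈ ℕ and t₀ ∈ ℝ. For δ with 0 < δ ≤ 1 define g_δ : ℝ → ℝ by g_δ t = δ^(−1/2) · b₀(δ⁻¹(t − t₀)) · (t − t₀)^(k+1). Then: (i) for each such δ, g_δ is infinitely differentiable and iteratedDeriv (k+1) g_δ t₀ = δ^(−1/2) · (k+1)!; (ii) there exists M ≥ 0 such that for all δ with 0 < δ ≤ 1, all l ≤ k, and all t ∈ ℝ, |iteratedDeriv l g_δ t| ≤ δ^(1/2) · M. -/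
open Topology Filter

lemma stmt10_smooth (b₀ : ℝ → ℝ)
    (h1 : ∀ s : ℝ, |s| ≤ 1 → b₀ s = 1)
    (h2 : ∀ s : ℝ, 1 < |s| → |s| < 3 →
      b₀ s = (1 + Real.exp (((2 - |s|) ^ 2 - 1)⁻¹ * (2 - |s|)))⁻¹)
    (h3 : ∀ s : ℝ, 3 ≤ |s| → b₀ s = 0) : ContDiff ℝ (⊤ : ℕ∞) b₀ := by
  have hpos : ∀ u : ℝ, 0 < expNegInvGlue (2 * (1 + u)) + expNegInvGlue (2 * (1 - u)) := by
    intro u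
    rcases le_or_gt u 0 with h | h
    · exact add_pos_of_nonneg_of_pos (expNegInvGlue.nonneg _)
        (expNegInvGlue.pos_of_pos (by linarith))
    · exact add_pos_of_pos_of_nonneg (expNegInvGlue.pos_of_pos (by linarith))
        (expNegInvGlue.nonneg _)
  have hF : ContDiff ℝ (⊤ : ℕ∞) (fun u : ℝ => expNegInvGlue (2 * (1 + u)) /
      (expNegInvGlue (2 * (1 + u)) + expNegInvGlue (2 * (1 - u)))) := by
    have e1 : ContDiff ℝ (⊤ : ℕ∞) (fun u : ℝ => expNegInvGlue (2 * (1 + u))) :=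
      expNegInvGlue.contDiff.comp (by fun_prop)
    have e2 : ContDiff ℝ (⊤ : ℕ∞) (fun u : ℝ => expNegInvGlue (2 * (1 - u))) :=
      expNegInvGlue.contDiff.comp (by fun_prop)
    exact e1.div (e1.add e2) (fun u => (hpos u).ne')
  have hb : ∀ s, b₀ s = (fun u : ℝ => expNegInvGlue (2 * (1 + u)) /
      (expNegInvGlue (2 * (1 + u)) + expNegInvGlue (2 * (1 - u)))) (2 - |s|) := by
    intro s
    have hp := hpos (2 - |s|)
    dsimp only
    rcases le_or_gt |s| 1 with h | h
    · rw [h1 s h]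
      rw [expNegInvGlue.zero_of_nonpos (x := 2 * (1 - (2 - |s|))) (by linarith)] at hp ⊢
      rw [add_zero] at hp ⊢
      exact (div_self hp.ne').symm
    · rcases lt_or_ge |s| 3 with h' | h'
      · rw [h2 s h h']
        generalize |s| = r at *
        have a1 : ¬ (2 * (1 + (2 - r)) ≤ 0) := by linarith
        have a2 : ¬ (2 * (1 - (2 - r)) ≤ 0) := by linarith
        simp only [expNegInvGlue, a1, a2, if_false]
        have key : ((2 - r) ^ 2 - 1)⁻¹ * (2 - r) =
            -(2 * (1 - (2 - r)))⁻¹ - -(2 * (1 + (2 - r)))⁻¹ := by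
          have b1 : r - 1 ≠ 0 := by linarith
          have b2 : 3 - r ≠ 0 := by linarith
          have c0 : (2 - r) ^ 2 - 1 = -((r - 1) * (3 - r)) := by ring
          have c1 : 1 - (2 - r) = r - 1 := by ring
          have c2 : 1 + (2 - r) = 3 - r := by ring
          rw [c0, c1, c2]
          field_simp
          ring
        rw [key, Real.exp_sub]
        have q1 := Real.exp_pos (-(2 * (1 + (2 - r)))⁻¹)
        have q2 := Real.exp_pos (-(2 * (1 - (2 - r)))⁻¹)
        generalize Real.exp (-(2 * (1 + (2 - r)))⁻¹) = x at *
        generalize Real.exp (-(2 * (1 - (2 - r)))⁻¹) = y at *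
        field_simp
      · rw [h3 s h', expNegInvGlue.zero_of_nonpos (x := 2 * (1 + (2 - |s|))) (by linarith)]
        simp
  rw [contDiff_iff_contDiffAt]
  intro s
  by_cases hs : s = 0
  · subst hs
    have : b₀ =ᶠ[𝓝 0] fun _ => (1 : ℝ) := by
      filter_upwards [Metric.ball_mem_nhds (0 : ℝ) one_pos] with t ht
      apply h1
      simpa using (mem_ball_zero_iff.1 ht).le
    exact contDiffAt_const.congr_of_eventuallyEq this
  · rw [show b₀ = _ from funext hb]
    exact hF.contDiffAt.comp s (contDiffAt_const.sub (contDiffAt_abs hs))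

lemma stmt10_bound (f : ℝ → ℝ) (hf : ContDiff ℝ (⊤ : ℕ∞) f) (h3 : ∀ s : ℝ, 3 ≤ |s| → f s = 0)
    (l : ℕ) : ∃ C : ℝ, 0 ≤ C ∧ ∀ x, |iteratedDeriv l f x| ≤ C := by
  have hc : Continuous (iteratedDeriv l f) :=
    hf.continuous_iteratedDeriv l (by exact_mod_cast le_top)
  obtain ⟨C, hC⟩ := (isCompact_Icc (a := (-4 : ℝ)) (b := 4)).exists_bound_of_continuousOn
    hc.continuousOn
  have C0 : 0 ≤ C := (norm_nonneg _).trans (hC 0 (by norm_num))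
  refine ⟨C, C0, fun x => ?_⟩
  by_cases hx : x ∈ Set.Icc (-4 : ℝ) 4
  · simpa using hC x hx
  · have hx' : 3 < |x| := by
      by_contra hcon
      exact hx (by constructor <;> linarith [(abs_le.1 (not_lt.1 hcon)).1, (abs_le.1 (not_lt.1 hcon)).2])
    have : f =ᶠ[𝓝 x] fun _ => (0 : ℝ) := by
      filter_upwards [continuous_abs.continuousAt.eventually (lt_mem_nhds hx')] with t ht
      exact h3 t ht.le
    rw [this.iteratedDeriv_eq]
    simpa [iteratedDeriv_const] using C0

/-- The one-dimensional scaled bump-times-monomial function of Remarks 5(b):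
`g_δ t = δ^(−1/2) b₀(δ⁻¹(t−t₀)) (t−t₀)^(k+1)` is smooth with
`D^(k+1) g_δ (t₀) = δ^(−1/2) (k+1)!`, while its derivatives up to order `k` are
bounded by `δ^(1/2) · M` with `M` independent of `δ ∈ (0,1]`. -/
theorem stmt10 (b₀ : ℝ → ℝ)
    (h1 : ∀ s : ℝ, |s| ≤ 1 → b₀ s = 1)
    (h2 : ∀ s : ℝ, 1 < |s| → |s| < 3 →
      b₀ s = (1 + Real.exp (((2 - |s|) ^ 2 - 1)⁻¹ * (2 - |s|)))⁻¹)
    (h3 : ∀ s : ℝ, 3 ≤ |s| → b₀ s = 0)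
    (k : ℕ) (t₀ : ℝ) (g : ℝ → ℝ → ℝ)
    (hg : ∀ δ : ℝ, 0 < δ → δ ≤ 1 → ∀ t : ℝ,
      g δ t = δ ^ (-(1 : ℝ) / 2) * b₀ (δ⁻¹ * (t - t₀)) * (t - t₀) ^ (k + 1)) :
    (∀ δ : ℝ, 0 < δ → δ ≤ 1 →
      ContDiff ℝ (⊤ : ℕ∞) (g δ) ∧
        iteratedDeriv (k + 1) (g δ) t₀ = δ ^ (-(1 : ℝ) / 2) * ((k + 1).factorial : ℝ)) ∧
    ∃ M : ℝ, 0 ≤ M ∧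
      ∀ δ : ℝ, 0 < δ → δ ≤ 1 → ∀ l : ℕ, l ≤ k → ∀ t : ℝ,
        |iteratedDeriv l (g δ) t| ≤ δ ^ ((1 : ℝ) / 2) * M := by
  have hb := stmt10_smooth b₀ h1 h2 h3
  obtain ⟨f, hfdef⟩ : ∃ f : ℝ → ℝ, f = fun s => b₀ s * s ^ (k + 1) := ⟨_, rfl⟩
  have hf : ContDiff ℝ (⊤ : ℕ∞) f := by
    rw [hfdef]; exact hb.mul (contDiff_id.pow _)
  have hf3 : ∀ s : ℝ, 3 ≤ |s| → f s = 0 := by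
    intro s hs; simp [hfdef, h3 s hs]
  have hgf : ∀ δ : ℝ, 0 < δ → δ ≤ 1 →
      g δ = fun t => (δ ^ (-(1 : ℝ) / 2) * δ ^ (k + 1)) * f (δ⁻¹ * (t - t₀)) := by
    intro δ h0 hδ
    funext t
    rw [hg δ h0 hδ t, hfdef]
    simp only [mul_pow, inv_pow]
    field_simp
  have hder : ∀ δ : ℝ, 0 < δ → δ ≤ 1 → ∀ (l : ℕ) (t : ℝ),
      iteratedDeriv l (g δ) t = (δ ^ (-(1 : ℝ) / 2) * δ ^ (k + 1)) *
        (δ⁻¹ ^ l * iteratedDeriv l f (δ⁻¹ * (t - t₀))) := by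
    intro δ h0 hδ l t
    rw [hgf δ h0 hδ, iteratedDeriv_const_mul_field]
    congr 1
    have e1 := congrFun (iteratedDeriv_comp_sub_const l (fun t => f (δ⁻¹ * t)) t₀) t
    rw [iteratedDeriv_comp_const_mul (hf.of_le (by exact_mod_cast le_top))] at e1
    exact e1
  refine ⟨fun δ h0 hδ => ⟨?_, ?_⟩, ?_⟩
  · rw [hgf δ h0 hδ]
    exact contDiff_const.mul (hf.comp (contDiff_const.mul (contDiff_id.sub contDiff_const)))
  · rw [hder δ h0 hδ]
    have e : f =ᶠ[𝓝 0] fun s => s ^ (k + 1) := by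
      filter_upwards [Metric.ball_mem_nhds (0 : ℝ) one_pos] with t ht
      have : |t| ≤ 1 := by simpa using (mem_ball_zero_iff.1 ht).le
      simp [hfdef, h1 t this]
    rw [sub_self, mul_zero, e.iteratedDeriv_eq, iteratedDeriv_fun_pow_zero]
    simp only [if_true, inv_pow]
    field_simp
  · choose C C0 hC using stmt10_bound f hf hf3
    refine ⟨∑ l ∈ Finset.range (k + 1), C l, Finset.sum_nonneg fun l _ => C0 l, ?_⟩
    intro δ h0 hδ l hl t
    have hsum : C l ≤ ∑ l ∈ Finset.range (k + 1), C l :=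
      Finset.single_le_sum (f := C) (fun l _ => C0 l) (Finset.mem_range.2 (by omega))
    obtain ⟨m, rfl⟩ := Nat.exists_eq_add_of_le hl
    have hr : δ ^ ((1 : ℝ) / 2) = δ ^ (-(1 : ℝ) / 2) * δ := by
      nth_rewrite 3 [← Real.rpow_one δ]
      rw [← Real.rpow_add h0]
      norm_num
    have hpow : δ ^ (l + m + 1) * δ⁻¹ ^ l = δ * δ ^ m := by
      rw [inv_pow]; field_simp; ring
    have hp := Real.rpow_pos_of_pos h0 (-(1 : ℝ) / 2)
    rw [hder δ h0 hδ, hr]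
    rw [show ∀ z : ℝ, (δ ^ (-(1 : ℝ) / 2) * δ ^ (l + m + 1)) * (δ⁻¹ ^ l * z) =
      δ ^ (-(1 : ℝ) / 2) * (δ ^ (l + m + 1) * δ⁻¹ ^ l) * z from fun z => by ring, hpow, abs_mul,
      abs_of_nonneg (by positivity)]
    have hm : δ ^ m ≤ 1 := pow_le_one₀ h0.le hδ
    have hmd : δ ^ (-(1 : ℝ) / 2) * (δ * δ ^ m) ≤ δ ^ (-(1 : ℝ) / 2) * δ := by
      gcongr
      exact mul_le_of_le_one_right h0.le hm
    exact mul_le_mul hmd ((hC l _).trans hsum) (abs_nonneg _) (by positivity)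
end

section
/- Let x : ℝ → ℝ be infinitely differentiable and define x̄ : ℝ × ℝ → ℝ by x̄ (s, t) = x (s + t). Then x̄ is infinitely differentiable, the map x ↦ x̄ is linear in x, and for every n ∈ ℕ and every (s, t) ∈ ℝ × ℝ one has ‖iteratedFDeriv ℝ n x̄ (s, t)‖ ≤ 2^n · |iteratedDeriv n x (s + t)|. -/
/-- Example 4 of the paper: the prescription `x ↦ x̄`, `x̄(s,t) = x(s+t)`, defines a
continuous linear map `C^∞(ℝ) → C^∞(ℝ×ℝ)`: `x̄` is smooth, the assignment is linear,
and `‖iteratedFDeriv ℝ n x̄ (s,t)‖ ≤ 2^n |iteratedDeriv n x (s+t)|`. -/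
theorem stmt11 (x : ℝ → ℝ) (hx : ContDiff ℝ (⊤ : ℕ∞) x) :
    ContDiff ℝ (⊤ : ℕ∞) (fun p : ℝ × ℝ => x (p.1 + p.2)) ∧
    (∀ y z : ℝ → ℝ, ∀ c : ℝ,
      (fun p : ℝ × ℝ => (y + z) (p.1 + p.2)) =
        (fun p : ℝ × ℝ => y (p.1 + p.2)) + (fun p : ℝ × ℝ => z (p.1 + p.2)) ∧
      (fun p : ℝ × ℝ => (c • y) (p.1 + p.2)) = c • (fun p : ℝ × ℝ => y (p.1 + p.2))) ∧
    ∀ n : ℕ, ∀ p : ℝ × ℝ,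
      ‖iteratedFDeriv ℝ n (fun p : ℝ × ℝ => x (p.1 + p.2)) p‖ ≤
        2 ^ n * |iteratedDeriv n x (p.1 + p.2)| := by
  refine ⟨hx.comp (contDiff_fst.add contDiff_snd), fun y z c => ⟨rfl, rfl⟩, fun n p => ?_⟩
  let g : ℝ × ℝ →L[ℝ] ℝ := ContinuousLinearMap.fst ℝ ℝ ℝ + ContinuousLinearMap.snd ℝ ℝ ℝ
  have hg : ‖g‖ ≤ 2 := by
    refine (norm_add_le _ _).trans ?_
    have h1 := ContinuousLinearMap.norm_fst_le ℝ ℝ ℝ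
    have h2 := ContinuousLinearMap.norm_snd_le ℝ ℝ ℝ
    linarith
  have h := g.iteratedFDeriv_comp_right hx p (i := n) (by exact_mod_cast le_top)
  have e : (fun p : ℝ × ℝ => x (p.1 + p.2)) = x ∘ g := rfl
  have e2 : g p = p.1 + p.2 := rfl
  rw [e, h]
  refine (ContinuousMultilinearMap.norm_compContinuousLinearMap_le _ _).trans ?_
  rw [norm_iteratedFDeriv_eq_norm_iteratedDeriv, Finset.prod_const, Finset.card_univ,
    Fintype.card_fin, e2, Real.norm_eq_abs, mul_comm]
  gcongr
end

section
/- Let φ : ℝ × ℝ × ℝ → ℝ be infinitely differentiable with φ (t, η + 1, ξ) = φ (t, η, ξ) for all t, η, ξ. Let y, v : ℝ × ℝ → ℝ be continuous with y (t, η + 1) = y (t, η) and v (t, η + 1) = v (t, η) for all t, η. Then for every ε > 0 there exists δ > 0 such that for every real τ with 0 < |τ| < δ and every (t, η) ∈ [0,1] × ℝ, |τ⁻¹·(φ (t, η, y (t,η) + τ·v (t,η)) − φ (t, η, y (t,η))) − (deriv (fun ξ => φ (t, η, ξ)) (y (t,η))) · v (t,η)| < ε. -/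
/-- Uniform linearization step from Remarks 5(b): for smooth `φ` that is 1-periodic in
its second variable and continuous 1-periodic `y, v` on the cylinder `Q = [0,1] × ℝ`,
the difference quotients of `ξ ↦ φ(t,η,ξ)` along `y + τ v` converge to
`∂₃φ(t,η,y(t,η)) · v(t,η)` uniformly in `(t,η) ∈ [0,1] × ℝ`. -/
theorem stmt12 (φ : ℝ × ℝ × ℝ → ℝ) (hφ : ContDiff ℝ (⊤ : ℕ∞) φ)
    (hφper : ∀ t η ξ : ℝ, φ (t, η + 1, ξ) = φ (t, η, ξ))
    (y v : ℝ × ℝ → ℝ) (hy : Continuous y) (hv : Continuous v)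
    (hyper : ∀ t η : ℝ, y (t, η + 1) = y (t, η))
    (hvper : ∀ t η : ℝ, v (t, η + 1) = v (t, η)) :
    ∀ ε : ℝ, 0 < ε → ∃ δ : ℝ, 0 < δ ∧
      ∀ τ : ℝ, 0 < |τ| → |τ| < δ → ∀ t η : ℝ, t ∈ Set.Icc (0 : ℝ) 1 →
        |τ⁻¹ * (φ (t, η, y (t, η) + τ * v (t, η)) - φ (t, η, y (t, η))) -
            deriv (fun ξ : ℝ => φ (t, η, ξ)) (y (t, η)) * v (t, η)| < ε := by
  intro ε hε
  have hφ1 : Differentiable ℝ φ := hφ.differentiable (by simp)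
  have hφc : Continuous (fderiv ℝ φ) := hφ.continuous_fderiv (by simp)
  have hD : ∀ t η ξ : ℝ, HasDerivAt (fun ξ : ℝ => φ (t, η, ξ))
      (fderiv ℝ φ (t, η, ξ) (0, 0, 1)) ξ := by
    intro t η ξ
    have h1 : HasDerivAt (fun ξ : ℝ => (t, η, ξ)) ((0 : ℝ), (0 : ℝ), (1 : ℝ)) ξ :=
      (hasDerivAt_const ξ t).prodMk ((hasDerivAt_const ξ η).prodMk (hasDerivAt_id ξ))
    exact (hφ1 (t, η, ξ)).hasFDerivAt.comp_hasDerivAt ξ h1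
  let F : (ℝ × ℝ) × ℝ → ℝ := fun q =>
    fderiv ℝ φ (q.1.1, q.1.2, y q.1 + q.2 * v q.1) (0, 0, 1) * v q.1
      - fderiv ℝ φ (q.1.1, q.1.2, y q.1) (0, 0, 1) * v q.1
  have hF : Continuous F := by
    have a1 : Continuous fun q : (ℝ × ℝ) × ℝ =>
        fderiv ℝ φ (q.1.1, q.1.2, y q.1 + q.2 * v q.1) := hφc.comp (by fun_prop)
    have a2 : Continuous fun q : (ℝ × ℝ) × ℝ =>
        fderiv ℝ φ (q.1.1, q.1.2, y q.1) := hφc.comp (by fun_prop)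
    have a3 : Continuous fun q : (ℝ × ℝ) × ℝ => v q.1 := by fun_prop
    exact ((a1.clm_apply continuous_const).mul a3).sub
      ((a2.clm_apply continuous_const).mul a3)
  have hK : IsCompact (Set.Icc (0 : ℝ) 1 ×ˢ Set.Icc (0 : ℝ) 1) := isCompact_Icc.prod isCompact_Icc
  have hev : ∀ᶠ s in nhds (0 : ℝ), ∀ p ∈ Set.Icc (0 : ℝ) 1 ×ˢ Set.Icc (0 : ℝ) 1,
      |F (p, s)| < ε / 2 := by
    apply hK.eventually_forall_of_forall_eventually
    intro p _
    have hc : Continuous fun z : (ℝ × ℝ) × ℝ => |F z| := hF.abs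
    have h0 : |F (p, 0)| < ε / 2 := by simpa [F] using hε
    first
      | exact hc.continuousAt.eventually (gt_mem_nhds h0)
      | exact (hc.comp continuous_swap).continuousAt.eventually (gt_mem_nhds h0)
  obtain ⟨δ, hδ, hball⟩ := Metric.eventually_nhds_iff_ball.1 hev
  refine ⟨δ, hδ, fun τ hτ0 hτ t η ht => ?_⟩
  have hper : Function.Periodic (fun η : ℝ =>
      |τ⁻¹ * (φ (t, η, y (t, η) + τ * v (t, η)) - φ (t, η, y (t, η))) -
            deriv (fun ξ : ℝ => φ (t, η, ξ)) (y (t, η)) * v (t, η)|) 1 := by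
    intro η
    simp only [hφper, hyper, hvper]
  obtain ⟨θ, hθ, he⟩ := hper.exists_mem_Ico₀ one_pos η
  refine lt_of_eq_of_lt he ?_
  clear he
  have hp : (t, θ) ∈ Set.Icc (0 : ℝ) 1 ×ˢ Set.Icc (0 : ℝ) 1 := ⟨ht, hθ.1, hθ.2.le⟩
  rw [(hD t θ (y (t, θ))).deriv]
  set c := fderiv ℝ φ (t, θ, y (t, θ)) (0, 0, 1) * v (t, θ) with hc
  have hder : ∀ s : ℝ, HasDerivAt (fun s : ℝ => φ (t, θ, y (t, θ) + s * v (t, θ)) - s * c)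
      (F ((t, θ), s)) s := by
    intro s
    have h1 : HasDerivAt (fun s : ℝ => y (t, θ) + s * v (t, θ)) (v (t, θ)) s := by
      simpa using ((hasDerivAt_id s).mul_const (v (t, θ))).const_add (y (t, θ))
    have h2 := (hD t θ (y (t, θ) + s * v (t, θ))).comp s h1
    have h3 : HasDerivAt (fun s : ℝ => s * c) c s := by
      simpa using (hasDerivAt_id s).mul_const c
    exact h2.sub h3
  have hm := (convex_ball (0 : ℝ) δ).norm_image_sub_le_of_norm_hasDerivWithin_le
    (fun s _ => (hder s).hasDerivWithinAt)
    (fun s hs => (Real.norm_eq_abs _).trans_le (hball s hs (t, θ) hp).le)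
    (Metric.mem_ball_self hδ) (show τ ∈ Metric.ball (0 : ℝ) δ by simpa using hτ)
  simp only [Real.norm_eq_abs, zero_mul, add_zero, sub_zero] at hm
  have hne : τ ≠ 0 := abs_pos.1 hτ0
  have hrw : τ⁻¹ * (φ (t, θ, y (t, θ) + τ * v (t, θ)) - φ (t, θ, y (t, θ))) - c
      = τ⁻¹ * (φ (t, θ, y (t, θ) + τ * v (t, θ)) - τ * c - φ (t, θ, y (t, θ))) := by
    field_simp
    ring
  rw [hrw, abs_mul, abs_inv, inv_mul_lt_iff₀ hτ0]
  nlinarith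
end

section
/- Let x : ℝ → ℝ be continuously differentiable and let v : ℝ × ℝ → ℝ be continuously differentiable. Define y : ℝ × ℝ → ℝ by y (t, η) = x (η − t) + ∫_{τ ∈ [0, t]} v (τ, η − t + τ) dτ. Then y is differentiable, y (0, η) = x η for all η, and for all (t, η) ∈ ℝ × ℝ the partial derivatives satisfy ∂₁ y (t, η) + ∂₂ y (t, η) = v (t, η), where ∂₁ and ∂₂ denote the partial derivatives in the first and second variable respectively. -/
theorem aux_diff (G : (ℝ × ℝ) × ℝ → ℝ) (hG : ContDiff ℝ 1 G) :
    Differentiable ℝ (fun p : ℝ × ℝ => ∫ s in (0 : ℝ)..1, G (p, s)) := by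
  intro p
  have hc : Continuous (fun q : (ℝ × ℝ) × ℝ =>
      (fderiv ℝ G q).comp (ContinuousLinearMap.inl ℝ (ℝ × ℝ) ℝ)) :=
    (hG.continuous_fderiv one_ne_zero).clm_comp continuous_const
  obtain ⟨C, hC⟩ := ((isCompact_closedBall p 1).prod
    (isCompact_Icc (a := (0 : ℝ)) (b := 1))).exists_bound_of_continuousOn hc.continuousOn
  have hGc := hG.continuous
  refine (intervalIntegral.hasFDerivAt_integral_of_dominated_of_fderiv_le (𝕜 := ℝ)
    (F := fun p s => G (p, s))
    (F' := fun p s => (fderiv ℝ G (p, s)).comp (ContinuousLinearMap.inl ℝ (ℝ × ℝ) ℝ))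
    (bound := fun _ => C) (Metric.closedBall_mem_nhds p one_pos) ?_ ?_ ?_ ?_ ?_ ?_).differentiableAt
  · exact Filter.Eventually.of_forall fun q =>
      (hGc.comp (by fun_prop : Continuous fun s : ℝ => (q, s))).aestronglyMeasurable
  · exact (hGc.comp (by fun_prop : Continuous fun s : ℝ => (p, s))).intervalIntegrable _ _
  · exact (hc.comp (by fun_prop : Continuous fun s : ℝ => (p, s))).aestronglyMeasurable
  · refine Filter.Eventually.of_forall fun s hs q hq => hC (q, s) ⟨hq, ?_⟩
    rw [Set.uIoc_of_le zero_le_one] at hs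
    exact ⟨hs.1.le, hs.2⟩
  · exact intervalIntegrable_const
  · refine Filter.Eventually.of_forall fun s hs q hq => ?_
    exact ((hG.differentiable one_ne_zero) (q, s)).hasFDerivAt.comp q (hasFDerivAt_prodMk_left q s)

/-- Example 2 of the paper (the operators `S` and `I`): for `C¹` data `x` and `v`,
`y(t,η) = x(η−t) + ∫₀ᵗ v(τ, η−t+τ) dτ` is differentiable, satisfies `y(0,·) = x`,
and solves the transport equation `∂₁y + ∂₂y = v`. -/
theorem stmt13 (x : ℝ → ℝ) (hx : ContDiff ℝ 1 x)
    (v : ℝ × ℝ → ℝ) (hv : ContDiff ℝ 1 v)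
    (y : ℝ × ℝ → ℝ)
    (hy : ∀ t η : ℝ, y (t, η) = x (η - t) + ∫ τ in (0 : ℝ)..t, v (τ, η - t + τ)) :
    Differentiable ℝ y ∧ (∀ η : ℝ, y (0, η) = x η) ∧
      ∀ t η : ℝ,
        deriv (fun s : ℝ => y (s, η)) t + deriv (fun s : ℝ => y (t, s)) η = v (t, η) := by
  have hd : Differentiable ℝ y := by
    have e : y = fun p : ℝ × ℝ => x (p.2 - p.1) +
        p.1 * ∫ s in (0 : ℝ)..1, v (p.1 * s, p.2 - p.1 + p.1 * s) := by
      funext ⟨t, η⟩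
      rw [hy]
      have := intervalIntegral.mul_integral_comp_mul_left (a := 0) (b := 1)
        (f := fun τ => v (τ, η - t + τ)) t
      simp only [mul_zero, mul_one] at this
      rw [← this]
    rw [e]
    have h1 := aux_diff (fun q => v (q.1.1 * q.2, q.1.2 - q.1.1 + q.1.1 * q.2))
      (hv.comp (by fun_prop))
    have h2 := hx.differentiable one_ne_zero
    exact (h2.comp (by fun_prop : Differentiable ℝ fun p : ℝ × ℝ => p.2 - p.1)).add
      (differentiable_fst.mul h1)
  refine ⟨hd, fun η => by simp [hy], fun t η => ?_⟩
  have hF := (hd (t, η)).hasFDerivAt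
  have d1 : HasDerivAt (fun s : ℝ => y (s, η)) (fderiv ℝ y (t, η) (1, 0)) t :=
    hF.comp_hasDerivAt t ((hasDerivAt_id t).prodMk (hasDerivAt_const t η))
  have d2 : HasDerivAt (fun s : ℝ => y (t, s)) (fderiv ℝ y (t, η) (0, 1)) η :=
    hF.comp_hasDerivAt η ((hasDerivAt_const η t).prodMk (hasDerivAt_id η))
  have d3 : HasDerivAt (fun s : ℝ => y (s, η - t + s)) (fderiv ℝ y (t, η) (1, 1)) t := by
    have hF' : HasFDerivAt y (fderiv ℝ y (t, η)) (t, η - t + t) := by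
      rw [sub_add_cancel]; exact hF
    exact hF'.comp_hasDerivAt t ((hasDerivAt_id t).prodMk ((hasDerivAt_id t).const_add (η - t)))
  have d4 : HasDerivAt (fun s : ℝ => y (s, η - t + s)) (v (t, η)) t := by
    have e : (fun s : ℝ => y (s, η - t + s)) =
        fun s => x (η - t) + ∫ τ in (0 : ℝ)..s, v (τ, η - t + τ) := by
      funext s
      rw [hy, add_sub_cancel_right]
    rw [e]
    have hc : Continuous fun τ : ℝ => v (τ, η - t + τ) := hv.continuous.comp (by fun_prop)
    have := (hc.integral_hasStrictDerivAt 0 t).hasDerivAt.const_add (x (η - t))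
    simpa using this
  rw [d1.deriv, d2.deriv, ← d4.unique d3 |>.symm, ← map_add]
  simp
end
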